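/- Fix finite nonempty sets S₀, S₁, S₂ ⊂ ℕ with gcd of the nonzero elements of S₀ ∪ S₁ ∪ S₂ equal to 1 and u := max(b_{0R}, b_{1R}, b_{2R}) ≥ 1, where b_{iL} = min S_i, b_{iR} = max S_i. Suppose {i,j,k} = {0,1,2} are such that 0 < b_{iL}, b_{iR} = u, b_{jL} = 0, b_{jR} < u, and 0 < b_{kL} ≤ b_{kR} < u. Then for generic coefficients, the Newton polygon N(φ) of every irreducible φ ∈ ℂ[x,y] with φ(P₀/Q, P₁/Q) = 0 in ℂ(t) equals the convex hull of the five implicit points given in (e_i, e_j)-coordinates by (b_{jR}, 0), (b_{kR}, u − b_{kR}), (b_{kL}, u − b_{kL}), (0, u − b_{iL}), (0, 0). -/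

import Mathlib

open Polynomial

/-- The univariate polynomial with support `S` and coefficient vector `c`. -/
noncomputable def polyOfCoeffs (S : Finset ℕ) (c : {s // s ∈ S} → ℂ) : Polynomial ℂ :=
  ∑ s ∈ S.attach, Polynomial.C (c s) * Polynomial.X ^ (s : ℕ)

/-- The image of that polynomial in the field of rational functions `ℂ(t)`. -/
noncomputable def ratFuncOf (S : Finset ℕ) (c : {s // s ∈ S} → ℂ) : RatFunc ℂ :=
  algebraMap (Polynomial ℂ) (RatFunc ℂ) (polyOfCoeffs S c)

/-- The Newton polygon of a bivariate polynomial: the convex hull in `ℝ²` of its support. -/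
noncomputable def newtonPolygon (φ : MvPolynomial (Fin 2) ℂ) : Set (ℝ × ℝ) :=
  convexHull ℝ ((fun d : Fin 2 →₀ ℕ => ((d 0 : ℝ), (d 1 : ℝ))) '' ↑φ.support)

/-- `φ(P₀/Q, P₁/Q) = 0` in `ℂ(t)`, where `P₀, P₁, Q` have supports `S 0, S 1, S 2`
and coefficient vector `c`. -/
def vanishesSame (S : Fin 3 → Finset ℕ)
    (c : (Σ i : Fin 3, {s // s ∈ S i}) → ℂ) (φ : MvPolynomial (Fin 2) ℂ) : Prop :=
  MvPolynomial.aeval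
    ![ratFuncOf (S 0) (fun s => c ⟨0, s⟩) / ratFuncOf (S 2) (fun s => c ⟨2, s⟩),
      ratFuncOf (S 1) (fun s => c ⟨1, s⟩) / ratFuncOf (S 2) (fun s => c ⟨2, s⟩)] φ = 0

/-- The implicit point determined by a pair `(a, b)` given in `(e_i, e_j)`-coordinates:
the triple `(e₀, e₁, e₂)` has `e_i = a`, `e_j = b` and `e_k = u - a - b`, and the implicit
point is `(e₀, e₁) ∈ ℝ²`. -/
def implicitPoint (i j : Fin 3) (u a b : ℕ) : ℝ × ℝ :=
  (((if (0 : Fin 3) = i then a else if (0 : Fin 3) = j then b else u - a - b : ℕ) : ℝ),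
   ((if (1 : Fin 3) = i then a else if (1 : Fin 3) = j then b else u - a - b : ℕ) : ℝ))

/-!
Write `A = P_i`, `B = P_j`, `D = P_k`, `x = A / B` and `z = D / B`. The resultant of `A - x B` and
`D - z B` with respect to `t` is a relation between `x` and `z`, of degree `u` in `z` with constant
leading coefficient, and for generic coefficients it divides all others. Indeed
`[ℂ(t) : ℂ(x)] = u`, so it is enough that `ℂ(x, z) = ℂ(t)`. The minimal polynomial of `t` over
`ℂ(x, z)`, cleared of denominators, divides `A(s) B(t) - A(t) B(s)` and its analogues; looking at
the extreme coefficients in `s` of these multiples shows that some power `t ^ n` lies in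
`ℂ(x, z)`. Every conjugate of `t` is then `ζ t` for a root of unity `ζ` that fixes `A`, `B` and
`D`, so that `ζ = 1` because the exponents are coprime.

The lowest weights of the entries of the Sylvester matrix bound the support of this relation on one
side in the `(e_i, e_k)`-plane, by the broken line through `(b_{kL}, 0)`, `(0, b_{iL})` and
`(0, u)`. The substitution `t ↦ 1 / t` exchanges the roles of `P_i` and `P_j` without changing the
homogeneous implicit equation, so it also bounds the support on the other side.
-/

section WeightBound

variable {R : Type*}

/-- Every monomial `x ^ e * z ^ m` of `p ∈ R[x][z]` has weight `a * e + c * m` at least `w`.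
Weights are integers because the weight of a Sylvester matrix entry may be negative. -/
def WeightGE [Semiring R] (a c : ℕ) (w : ℤ) (p : R[X][X]) : Prop :=
  ∀ m e : ℕ, (p.coeff m).coeff e ≠ 0 → w ≤ (a : ℤ) * e + (c : ℤ) * m

namespace WeightGE

section Semiring

variable [Semiring R] {a c : ℕ} {w v : ℤ} {p q : R[X][X]}

lemma mono (h : WeightGE a c w p) (hvw : v ≤ w) : WeightGE a c v p :=
  fun m e hme => hvw.trans (h m e hme)

lemma zero (a c : ℕ) (w : ℤ) : WeightGE a c w (0 : R[X][X]) := fun m e h => by simp at h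

lemma of_nonpos (a c : ℕ) (hw : w ≤ 0) (p : R[X][X]) : WeightGE a c w p :=
  fun _ _ _ => hw.trans (by positivity)

lemma C_X (a c : ℕ) : WeightGE a c a (C X : R[X][X]) := by
  intro m e h
  rw [coeff_C] at h
  split_ifs at h with hm
  · obtain ⟨rfl, -⟩ : 1 = e ∧ _ := by simpa [coeff_X] using h
    simp [hm]
  · simp at h

lemma X (a c : ℕ) : WeightGE a c c (X : R[X][X]) := by
  intro m e h
  rw [coeff_X] at h
  split_ifs at h with hm
  · obtain ⟨rfl, -⟩ : e = 0 ∧ _ := by simpa [coeff_one] using h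
    simp [← hm]
  · simp at h

lemma add (hp : WeightGE a c w p) (hq : WeightGE a c w q) : WeightGE a c w (p + q) := by
  intro m e h
  by_cases hpme : (p.coeff m).coeff e = 0
  · exact hq m e fun hqme => h (by simp [hpme, hqme])
  · exact hp m e hpme

lemma sum {ι : Type*} (s : Finset ι) (f : ι → R[X][X]) (hf : ∀ i ∈ s, WeightGE a c w (f i)) :
    WeightGE a c w (∑ i ∈ s, f i) :=
  Finset.sum_induction _ _ (fun _ _ => add) (zero a c w) hf

lemma mul (hp : WeightGE a c w p) (hq : WeightGE a c v q) : WeightGE a c (w + v) (p * q) := by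
  intro m e h
  rw [coeff_mul, finsetSum_coeff] at h
  obtain ⟨⟨m₁, m₂⟩, hm, h⟩ := Finset.exists_ne_zero_of_sum_ne_zero h
  rw [coeff_mul] at h
  obtain ⟨⟨e₁, e₂⟩, he, h⟩ := Finset.exists_ne_zero_of_sum_ne_zero h
  have hwp := hp m₁ e₁ (left_ne_zero_of_mul h)
  have hwq := hq m₂ e₂ (right_ne_zero_of_mul h)
  obtain rfl := Finset.HasAntidiagonal.mem_antidiagonal.1 hm
  obtain rfl := Finset.HasAntidiagonal.mem_antidiagonal.1 he
  push_cast
  linarith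

end Semiring

lemma neg [Ring R] {a c : ℕ} {w : ℤ} {p : R[X][X]} (h : WeightGE a c w p) :
    WeightGE a c w (-p) :=
  fun m e hme => h m e (by simpa using hme)

variable [CommRing R] {a c : ℕ} {ι : Type*}

lemma prod (s : Finset ι) (w : ι → ℤ) (f : ι → R[X][X])
    (hf : ∀ i ∈ s, WeightGE a c (w i) (f i)) : WeightGE a c (∑ i ∈ s, w i) (∏ i ∈ s, f i) := by
  classical
  induction s using Finset.induction_on with
  | empty => simpa using of_nonpos a c le_rfl 1
  | insert i s hi ih =>
    rw [Finset.sum_insert hi, Finset.prod_insert hi]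
    exact (hf i (by simp)).mul (ih fun j hj => hf j (by simp [hj]))

lemma det [Fintype ι] [DecidableEq ι] (M : Matrix ι ι R[X][X]) (y z : ι → ℤ)
    (hM : ∀ i j, WeightGE a c (y i + z j) (M i j)) :
    WeightGE a c (∑ i, y i + ∑ i, z i) M.det := by
  rw [Matrix.det_apply']
  refine sum _ _ fun σ _ => ?_
  have hprod := prod Finset.univ (fun i => y (σ i) + z i) (fun i => M (σ i) i) fun i _ => hM _ _
  rw [Finset.sum_add_distrib, Equiv.sum_comp σ y] at hprod
  simpa using (of_nonpos a c le_rfl _).mul hprod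

end WeightGE

end WeightBound

section Determinant

variable {R ι : Type*} [CommRing R]

lemma coeff_prod_sum_of_natDegree_le (s : Finset ι) (f : ι → R[X]) (d : ι → ℕ)
    (hf : ∀ i ∈ s, (f i).natDegree ≤ d i) :
    (∏ i ∈ s, f i).coeff (∑ i ∈ s, d i) = ∏ i ∈ s, (f i).coeff (d i) := by
  classical
  induction s using Finset.induction_on with
  | empty => simp
  | insert i s hi ih =>
    have hs : ∀ j ∈ s, (f j).natDegree ≤ d j := fun j hj => hf j (by simp [hj])
    rw [Finset.prod_insert hi, Finset.prod_insert hi, Finset.sum_insert hi,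
      coeff_mul_add_eq_of_natDegree_le (hf i (by simp))
        ((natDegree_prod_le s f).trans (Finset.sum_le_sum hs)), ih hs]

variable [Fintype ι] [DecidableEq ι] {M : Matrix ι ι R[X]} {d : ι → ℕ}

lemma natDegree_det_le_sum (hM : ∀ i j, (M i j).natDegree ≤ d j) :
    M.det.natDegree ≤ ∑ j, d j := by
  rw [Matrix.det_apply]
  refine natDegree_sum_le_of_forall_le _ _ fun σ _ => (natDegree_smul_le _ _).trans ?_
  exact (natDegree_prod_le _ _).trans (Finset.sum_le_sum fun j _ => hM _ _)

lemma coeff_det_sum (hM : ∀ i j, (M i j).natDegree ≤ d j) :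
    M.det.coeff (∑ j, d j) = (Matrix.of fun i j => (M i j).coeff (d j)).det := by
  simp only [Matrix.det_apply, finsetSum_coeff, coeff_smul, Matrix.of_apply]
  exact Finset.sum_congr rfl fun σ _ => by
    rw [coeff_prod_sum_of_natDegree_le _ _ _ fun j _ => hM (σ j) j]

end Determinant

section ImplicitResultant

variable {R S T : Type*} [CommRing R] [CommRing S] [Algebra R S] [CommRing T] [Algebra R T]

/-- The polynomial `A(t) - s B(t)`, whose vanishing says that the point `s` of the `R`-algebra `S`
is the value of `A / B` at `t`. -/
noncomputable def pencil (A B : R[X]) (s : S) : S[X] :=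
  A.map (algebraMap R S) - C s * B.map (algebraMap R S)

@[simp]
lemma coeff_pencil (A B : R[X]) (s : S) (l : ℕ) :
    (pencil A B s).coeff l = algebraMap R S (A.coeff l) - s * algebraMap R S (B.coeff l) := by
  simp [pencil]

lemma map_pencil (A B : R[X]) (s : S) (ψ : S →ₐ[R] T) :
    (pencil A B s).map (ψ : S →+* T) = pencil A B (ψ s) := by
  ext l
  simp

@[simp]
lemma pencil_zero (A B : R[X]) : pencil A B (0 : S) = A.map (algebraMap R S) := by
  simp [pencil]

lemma natDegree_pencil_le {A B : R[X]} {u : ℕ} (hA : A.natDegree ≤ u) (hB : B.natDegree ≤ u)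
    (s : S) : (pencil A B s).natDegree ≤ u :=
  (natDegree_sub_le _ _).trans <| max_le (natDegree_map_le.trans hA) <|
    (natDegree_C_mul_le _ _).trans (natDegree_map_le.trans hB)

/-- The resultant of `A(t) - x B(t)` and `D(t) - z B(t)` with respect to `t`, both regarded as
polynomials of degree `u`; it is the element of `R[x][z]` that vanishes at `(A / B, D / B)`. -/
noncomputable def implicitResultant (A B D : R[X]) (u : ℕ) : R[X][X] :=
  resultant (pencil A B (C X : R[X][X])) (pencil D B (X : R[X][X])) u u

lemma algHom_implicitResultant (A B D : R[X]) (u : ℕ) (ψ : R[X][X] →ₐ[R] S) :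
    ψ (implicitResultant A B D u) =
      resultant (pencil A B (ψ (C X))) (pencil D B (ψ X)) u u := by
  rw [implicitResultant, ← map_pencil _ _ _ ψ, ← map_pencil _ _ _ ψ, resultant_map_map]
  rfl

lemma weightGE_coeff_pencil {A : R[X]} {a c : ℕ} {w : ℤ} {s : R[X][X]} {l : ℕ}
    (hA : A.coeff l = 0) (B : R[X]) (hs : WeightGE a c w s) :
    WeightGE a c w ((pencil A B s).coeff l) := by
  rw [coeff_pencil, hA, map_zero, zero_sub]
  simpa using (hs.mul (WeightGE.of_nonpos a c le_rfl (algebraMap R R[X][X] (B.coeff l)))).neg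

lemma two_mul_sum_fin_tsub {k N : ℕ} (h : k ≤ N) :
    2 * ∑ i : Fin N, ((k - (i : ℕ) : ℕ) : ℤ) = (k : ℤ) * (k + 1) := by
  rw [Fin.sum_univ_eq_sum_range (fun i => ((k - i : ℕ) : ℤ)) N]
  induction k generalizing N with
  | zero => simp
  | succ k ih =>
    obtain ⟨N, rfl⟩ := Nat.exists_eq_add_one_of_ne_zero (by omega : N ≠ 0)
    rw [Finset.sum_range_succ']
    simp only [Nat.add_sub_add_right, Nat.sub_zero, mul_add, ih (Nat.le_of_succ_le_succ h)]
    push_cast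
    ring

-- Row `i` of the Sylvester matrix gets weight `a + c - i`; a column holding the coefficients of
-- `D - z B`, resp. `A - x B`, shifted by `j` gets weight `-(a - j)`, resp. `-(c - j)`.
-- All three differences are truncated at `0`.
theorem weightGE_implicitResultant {A D : R[X]} {u a c : ℕ} (B : R[X]) (ha : a ≤ u) (hc : c ≤ u)
    (hA : ∀ l < a, A.coeff l = 0) (hD : ∀ l < c, D.coeff l = 0) :
    WeightGE a c (a * c) (implicitResultant A B D u) := by
  let y : Fin (u + u) → ℤ := fun i => (a + c - (i : ℕ) : ℕ)
  let z : Fin (u + u) → ℤ := fun j => Fin.addCases (motive := fun _ => ℤ)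
    (fun j₁ => -((a - (j₁ : ℕ) : ℕ) : ℤ)) (fun j₁ => -((c - (j₁ : ℕ) : ℕ) : ℤ)) j
  have hsum : ∑ i, y i + ∑ j, z j = a * c := by
    have h₁ := two_mul_sum_fin_tsub (show a + c ≤ u + u by omega)
    have h₂ := two_mul_sum_fin_tsub ha
    have h₃ := two_mul_sum_fin_tsub hc
    simp only [y, z, Fin.sum_univ_add (f := fun j => Fin.addCases (motive := fun _ => ℤ) _ _ j),
      Fin.addCases_left, Fin.addCases_right, Finset.sum_neg_distrib]
    push_cast at h₁
    linarith
  rw [← hsum]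
  refine WeightGE.det _ y z fun i j => ?_
  induction j using Fin.addCases with
  | left j =>
    simp only [y, z, sylvester, Matrix.of_apply, Fin.addCases_left, Set.mem_Icc]
    split_ifs with hij
    · by_cases hl : (i : ℕ) - j < c
      · exact (weightGE_coeff_pencil (hD _ hl) B (WeightGE.X a c)).mono (by omega)
      · exact WeightGE.of_nonpos _ _ (by omega) _
    · exact WeightGE.zero _ _ _
  | right j =>
    simp only [y, z, sylvester, Matrix.of_apply, Fin.addCases_right, Set.mem_Icc]
    split_ifs with hij
    · by_cases hl : (i : ℕ) - j < a
      · exact (weightGE_coeff_pencil (hA _ hl) B (WeightGE.C_X a c)).mono (by omega)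
      · exact WeightGE.of_nonpos _ _ (by omega) _
    · exact WeightGE.zero _ _ _

section TopCoefficient

variable (f : S[X]) (D B : S[X]) (m n : ℕ)

lemma sum_addCases_one_zero :
    ∑ j : Fin (m + n), Fin.addCases (motive := fun _ => ℕ) (fun _ => 1) (fun _ => 0) j = m := by
  simp [Fin.sum_univ_add (f := fun j => Fin.addCases (motive := fun _ => ℕ) _ _ j)]

lemma natDegree_sylvester_pencil_le (i j : Fin (m + n)) :
    (sylvester (f.map C) (pencil D B (X : S[X])) m n i j).natDegree ≤
      Fin.addCases (motive := fun _ => ℕ) (fun _ => 1) (fun _ => 0) j := by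
  induction j using Fin.addCases with
  | left j =>
    simp only [sylvester, Matrix.of_apply, Fin.addCases_left, Set.mem_Icc]
    split_ifs
    · rw [coeff_pencil]
      simp only [algebraMap_eq]
      compute_degree
    · simp
  | right j =>
    simp only [sylvester, Matrix.of_apply, Fin.addCases_right, Set.mem_Icc]
    split_ifs <;> simp

lemma natDegree_resultant_pencil_le :
    (resultant (f.map C) (pencil D B (X : S[X])) m n).natDegree ≤ m :=
  (natDegree_det_le_sum (natDegree_sylvester_pencil_le f D B m n)).trans_eq
    (sum_addCases_one_zero m n)

lemma coeff_resultant_pencil :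
    (resultant (f.map C) (pencil D B (X : S[X])) m n).coeff m = resultant f (-B) m n := by
  have h := coeff_det_sum (natDegree_sylvester_pencil_le f D B m n)
  rw [sum_addCases_one_zero] at h
  rw [resultant, h, resultant]
  congr 1
  ext i j
  induction j using Fin.addCases with
  | left j =>
    simp only [sylvester, Matrix.of_apply, Fin.addCases_left, Set.mem_Icc]
    split_ifs <;> simp
  | right j =>
    simp only [sylvester, Matrix.of_apply, Fin.addCases_right, Set.mem_Icc]
    split_ifs <;> simp

end TopCoefficient

variable (A B D : R[X]) (u : ℕ)

lemma implicitResultant_eq :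
    implicitResultant A B D u = resultant ((pencil A B (X : R[X])).map C)
      (pencil (D.map C) (B.map C) (X : R[X][X])) u u := by
  have hx : pencil A B (C X : R[X][X]) = (pencil A B (X : R[X])).map C := by
    ext1 l
    simp only [coeff_pencil, coeff_map, Polynomial.algebraMap_apply, Algebra.algebraMap_self,
      RingHom.id_apply, C_sub, C_mul]
  have hz : pencil D B (X : R[X][X]) = pencil (D.map C) (B.map C) (X : R[X][X]) := by
    ext1 l
    simp [Polynomial.algebraMap_apply]
  rw [implicitResultant, hx, hz]

lemma natDegree_implicitResultant_le : (implicitResultant A B D u).natDegree ≤ u := by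
  rw [implicitResultant_eq]
  exact natDegree_resultant_pencil_le _ _ _ u u

lemma coeff_implicitResultant {B : R[X]} (hB : B.natDegree ≤ u) :
    (implicitResultant A B D u).coeff u = C (resultant A (-B) u u) := by
  have hpencil : pencil A B (X : R[X]) = A.map C + (-B).map C * C X := by
    simp only [pencil, Polynomial.map_neg, algebraMap_eq]
    ring
  rw [implicitResultant_eq, coeff_resultant_pencil, hpencil, ← Polynomial.map_neg,
    resultant_add_mul_left _ _ _ _ _ (by simp) (natDegree_map_le.trans (by simpa using hB)),
    resultant_map_map]

end ImplicitResultant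

section NoCommonNonzeroRoot

variable {F : Type*} [Field F]

/-- No `τ ≠ 0` is a root of both `p` and `q`. -/
def NoCommonNonzeroRoot (p q : F[X]) : Prop :=
  ∀ τ ≠ 0, p.eval τ = 0 → q.eval τ ≠ 0

namespace NoCommonNonzeroRoot

variable {p q : F[X]}

lemma symm (h : NoCommonNonzeroRoot p q) : NoCommonNonzeroRoot q p :=
  fun τ hτ hq hp => h τ hτ hp hq

lemma of_dvd_left {r : F[X]} (h : NoCommonNonzeroRoot p q) (hr : r ∣ p) :
    NoCommonNonzeroRoot r q :=
  fun τ hτ hrτ => h τ hτ (eval_eq_zero_of_dvd_of_eval_eq_zero hr hrτ)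

lemma isCoprime [IsAlgClosed F] (h : NoCommonNonzeroRoot p q) (hp : p.coeff 0 ≠ 0) :
    IsCoprime p q := by
  rw [isCoprime_iff_aeval_ne_zero_of_isAlgClosed F F]
  intro τ
  simp only [coe_aeval_eq_eval]
  rcases eq_or_ne τ 0 with rfl | hτ
  · exact .inl (by rwa [← coeff_zero_eq_eval_zero])
  · exact or_iff_not_imp_left.2 fun hpτ => h τ hτ (not_not.1 hpτ)

lemma reflect {u : ℕ} (h : NoCommonNonzeroRoot p q) (hp : p.natDegree ≤ u)
    (hq : q.natDegree ≤ u) : NoCommonNonzeroRoot (p.reflect u) (q.reflect u) := by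
  have eval_reflect {f : F[X]} (hf : f.natDegree ≤ u) {τ : F} (hτ : τ ≠ 0) :
      (f.reflect u).eval τ = 0 ↔ f.eval τ⁻¹ = 0 := by
    let _ : Invertible τ⁻¹ := invertibleOfNonzero (inv_ne_zero hτ)
    have h := eval₂_reflect_eq_zero_iff (RingHom.id F) τ⁻¹ u f hf
    rwa [invOf_eq_inv, inv_inv] at h
  intro τ hτ hpτ hqτ
  rw [eval_reflect hp hτ] at hpτ
  rw [eval_reflect hq hτ] at hqτ
  exact h _ (inv_ne_zero hτ) hpτ hqτ

end NoCommonNonzeroRoot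

end NoCommonNonzeroRoot

section Trailing

variable {R : Type*} [Semiring R] {p : R[X]}

lemma coeff_natTrailingDegree_ne_zero (hp : p ≠ 0) : p.coeff p.natTrailingDegree ≠ 0 :=
  trailingCoeff_nonzero_iff_nonzero.2 hp

lemma exists_eq_X_pow_natTrailingDegree_mul (hp : p ≠ 0) :
    ∃ q : R[X], p = X ^ p.natTrailingDegree * q ∧ q.coeff 0 ≠ 0 := by
  obtain ⟨q, hq⟩ := X_pow_dvd_iff.2 fun l => coeff_eq_zero_of_lt_natTrailingDegree (p := p)
  refine ⟨q, hq, fun hq₀ => coeff_natTrailingDegree_ne_zero hp ?_⟩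
  rw [hq, coeff_X_pow_mul', if_pos (by simp [← hq])]
  simp [← hq, hq₀]

lemma natDegree_reflect_lt {u : ℕ} (hu : 0 < u) (hp : p.natDegree ≤ u) (hp₀ : p.coeff 0 = 0) :
    (p.reflect u).natDegree < u := by
  refine lt_of_le_of_ne (natDegree_reflect_le.trans (max_le le_rfl hp)) fun h => ?_
  have hlead : (p.reflect u).leadingCoeff = 0 := by simp [leadingCoeff, h, hp₀]
  simp [leadingCoeff_eq_zero.1 hlead] at h
  omega

lemma natTrailingDegree_reflect {u : ℕ} (hp₀ : p ≠ 0) (hp : p.natDegree ≤ u) :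
    (p.reflect u).natTrailingDegree = u - p.natDegree := by
  apply le_antisymm
  · refine natTrailingDegree_le_of_ne_zero ?_
    rw [coeff_reflect, revAt_le (Nat.sub_le _ _), Nat.sub_sub_self hp]
    exact leadingCoeff_ne_zero.2 hp₀
  · refine le_natTrailingDegree (by simpa) fun m hm => ?_
    rw [coeff_reflect, revAt_le (by omega)]
    exact coeff_eq_zero_of_natDegree_lt (by omega)

end Trailing

/-- The hypotheses on `A = P_i`, `B = P_j`, `D = P_k` that hold for generic coefficients in case
(3B): the shape of the supports, the absence of unexpected common roots, and coprimality of the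
exponents, stated as a divisibility property so as to be visibly symmetric under `t ↦ 1 / t`. -/
structure NondegenerateTriple {F : Type*} [Field F] (A B D : F[X]) (u : ℕ) : Prop where
  natDegree_left : A.natDegree = u
  natDegree_mid_lt : B.natDegree < u
  natDegree_right_lt : D.natDegree < u
  coeff_zero_left : A.coeff 0 = 0
  coeff_zero_mid : B.coeff 0 ≠ 0
  coeff_zero_right : D.coeff 0 = 0
  right_ne_zero : D ≠ 0
  left_mid : NoCommonNonzeroRoot A B
  right_mid : NoCommonNonzeroRoot D B
  left_right : NoCommonNonzeroRoot A D
  eq_one_of_dvd_exponents : ∀ d : ℕ, (∀ s, A.coeff s ≠ 0 → d ∣ s) → (∀ s, B.coeff s ≠ 0 → d ∣ s) →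
    (∀ s, D.coeff s ≠ 0 → d ∣ s) → d = 1

namespace NondegenerateTriple

variable {F : Type*} [Field F] {A B D : F[X]} {u : ℕ}

lemma pos (h : NondegenerateTriple A B D u) : 0 < u :=
  (Nat.zero_le _).trans_lt h.natDegree_mid_lt

lemma left_ne_zero (h : NondegenerateTriple A B D u) : A ≠ 0 :=
  ne_zero_of_natDegree_gt (h.pos.trans_eq h.natDegree_left.symm)

lemma mid_ne_zero (h : NondegenerateTriple A B D u) : B ≠ 0 := by
  rintro rfl
  exact h.coeff_zero_mid (coeff_zero 0)

lemma coeff_left_ne_zero (h : NondegenerateTriple A B D u) : A.coeff u ≠ 0 := by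
  rw [← h.natDegree_left]
  exact leadingCoeff_ne_zero.2 h.left_ne_zero

theorem reflect (h : NondegenerateTriple A B D u) :
    NondegenerateTriple (B.reflect u) (A.reflect u) (D.reflect u) u where
  natDegree_left := le_antisymm
    (natDegree_reflect_le.trans (max_le le_rfl h.natDegree_mid_lt.le))
    (le_natDegree_of_ne_zero (by simpa using h.coeff_zero_mid))
  natDegree_mid_lt := natDegree_reflect_lt h.pos h.natDegree_left.le h.coeff_zero_left
  natDegree_right_lt := natDegree_reflect_lt h.pos h.natDegree_right_lt.le h.coeff_zero_right
  coeff_zero_left := by simpa using coeff_eq_zero_of_natDegree_lt h.natDegree_mid_lt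
  coeff_zero_mid := by simpa using h.coeff_left_ne_zero
  coeff_zero_right := by simpa using coeff_eq_zero_of_natDegree_lt h.natDegree_right_lt
  right_ne_zero := by simpa using h.right_ne_zero
  left_mid := (h.left_mid.reflect h.natDegree_left.le h.natDegree_mid_lt.le).symm
  right_mid := (h.left_right.reflect h.natDegree_left.le h.natDegree_right_lt.le).symm
  left_right := (h.right_mid.reflect h.natDegree_right_lt.le h.natDegree_mid_lt.le).symm
  eq_one_of_dvd_exponents d hB hA hD := by
    have hdu : d ∣ u := hB u (by simpa using h.coeff_zero_mid)
    have of_reflect {f : F[X]} (hf : f.natDegree ≤ u) (hd : ∀ s, (f.reflect u).coeff s ≠ 0 → d ∣ s)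
        (s : ℕ) (hs : f.coeff s ≠ 0) : d ∣ s := by
      have hsu : s ≤ u := (le_natDegree_of_ne_zero hs).trans hf
      refine (Nat.dvd_sub_iff_right hsu hdu).1 (hd _ ?_)
      rwa [coeff_reflect, revAt_le (Nat.sub_le _ _), Nat.sub_sub_self hsu]
    exact h.eq_one_of_dvd_exponents d (of_reflect h.natDegree_left.le hA)
      (of_reflect h.natDegree_mid_lt.le hB) (of_reflect h.natDegree_right_lt.le hD)

end NondegenerateTriple

section LowCoefficients

variable {F : Type*} [Field F] [IsAlgClosed F] {P Q B : F[X]} {n : ℕ}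

lemma coeff_resultant_pencil_natTrailingDegree_ne_zero (hP : P ≠ 0) (hQ₀ : Q.coeff 0 = 0)
    (hB₀ : B.coeff 0 ≠ 0) (hPQ : NoCommonNonzeroRoot P Q) (hQ : Q.natDegree ≤ n)
    (hB : B.natDegree ≤ n) :
    (resultant (P.map C) (pencil Q B (X : F[X])) P.natDegree n).coeff P.natTrailingDegree ≠ 0 := by
  set a := P.natTrailingDegree
  obtain ⟨P', hP', hP'₀⟩ := exists_eq_X_pow_natTrailingDegree_mul hP
  have hP'_ne : P' ≠ 0 := by rintro rfl; simp at hP'₀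
  have hdeg : P.natDegree = a + P'.natDegree := by
    rw [hP', natDegree_X_pow_mul _ hP'_ne, add_comm]
  have hpencil : (pencil Q B (X : F[X])).natDegree ≤ n := natDegree_pencil_le hQ hB X
  have hcoprime : IsCoprime P' Q :=
    (hPQ.of_dvd_left (hP' ▸ dvd_mul_left P' _)).isCoprime hP'₀
  have hmul := resultant_mul_left (X ^ a) (P'.map C) (pencil Q B (X : F[X])) n hpencil
  rw [natDegree_X_pow, resultant_X_pow_left _ _ _ hpencil,
    natDegree_map_eq_of_injective C_injective] at hmul
  have hzero : (resultant (P'.map C) (pencil Q B (X : F[X])) P'.natDegree n).coeff 0 =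
      resultant P' Q P'.natDegree n := by
    have hmap : ((P'.map C).map (evalRingHom (0 : F))) = P' := by
      ext; simp
    have hpencil₀ : (pencil Q B (X : F[X])).map (evalRingHom (0 : F)) = Q := by
      ext; simp
    rw [coeff_zero_eq_eval_zero, ← coe_evalRingHom, ← resultant_map_map, hmap, hpencil₀]
  have hres : resultant P' Q P'.natDegree n ≠ 0 := by
    obtain ⟨k, rfl⟩ := Nat.exists_eq_add_of_le hQ
    rw [resultant_add_right_deg _ _ _ _ _ le_rfl]
    exact mul_ne_zero (pow_ne_zero _ (leadingCoeff_ne_zero.2 hP'_ne))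
      (resultant_ne_zero _ _ hcoprime)
  have hsplit : resultant (P.map C) (pencil Q B (X : F[X])) P.natDegree n =
      X ^ a * (C ((-B.coeff 0) ^ a) *
        resultant (P'.map C) (pencil Q B (X : F[X])) P'.natDegree n) := by
    rw [hdeg, hP', Polynomial.map_mul, Polynomial.map_pow, map_X, hmul, coeff_pencil, hQ₀]
    simp only [algebraMap_eq, map_zero, zero_sub, map_pow, map_neg]
    ring
  rw [hsplit, coeff_X_pow_mul', if_pos le_rfl, Nat.sub_self, coeff_C_mul, hzero]
  exact mul_ne_zero (pow_ne_zero _ (neg_ne_zero.2 hB₀)) hres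

end LowCoefficients

section Specialization

variable {R : Type*} [CommRing R] (A B D : R[X]) (u : ℕ)

lemma map_evalRingHom_implicitResultant :
    (implicitResultant A B D u).map (evalRingHom 0) =
      resultant (A.map C) (pencil D B (X : R[X])) u u := by
  let ψ : R[X][X] →ₐ[R] R[X] := mapAlgHom (aeval 0)
  have h := algHom_implicitResultant A B D u ψ
  have hx : ψ (C X) = 0 := by simp [ψ]
  have hz : ψ X = X := by simp [ψ]
  rw [hx, hz, pencil_zero] at h
  exact h

lemma coeff_zero_implicitResultant :
    (implicitResultant A B D u).coeff 0 =
      resultant (pencil A B (X : R[X])) (D.map C) u u := by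
  let ψ : R[X][X] →ₐ[R] R[X] := (aeval (0 : R[X])).restrictScalars R
  have h := algHom_implicitResultant A B D u ψ
  have hx : ψ (C X) = X := aeval_C (R := R[X]) _ _
  have hz : ψ X = 0 := aeval_X (R := R[X]) _
  rw [hx, hz, pencil_zero] at h
  rwa [coeff_zero_eq_aeval_zero]

end Specialization

namespace NondegenerateTriple

variable {F : Type*} [Field F] {A B D : F[X]} {u : ℕ}

lemma weightGE_implicitResultant (h : NondegenerateTriple A B D u) :
    WeightGE A.natTrailingDegree D.natTrailingDegree (A.natTrailingDegree * D.natTrailingDegree)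
      (implicitResultant A B D u) :=
  _root_.weightGE_implicitResultant B
    ((natTrailingDegree_le_natDegree A).trans_eq h.natDegree_left)
    ((natTrailingDegree_le_natDegree D).trans h.natDegree_right_lt.le)
    (fun _ => coeff_eq_zero_of_lt_natTrailingDegree)
    (fun _ => coeff_eq_zero_of_lt_natTrailingDegree)

variable [IsAlgClosed F]

lemma exists_coeff_implicitResultant_eq_C (h : NondegenerateTriple A B D u) :
    ∃ κ : F, κ ≠ 0 ∧ (implicitResultant A B D u).coeff u = C κ := by
  refine ⟨_, ?_, coeff_implicitResultant A D u h.natDegree_mid_lt.le⟩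
  obtain ⟨k, hk⟩ := Nat.exists_eq_add_of_le h.natDegree_mid_lt.le
  have hcoprime : IsCoprime A (-B) := (h.left_mid.symm.isCoprime h.coeff_zero_mid).symm.neg_right
  have hres : resultant A (-B) u u =
      A.coeff u ^ k * resultant A (-B) A.natDegree (-B).natDegree := by
    rw [h.natDegree_left, natDegree_neg, ← resultant_add_right_deg _ _ _ _ _ (by simp), ← hk]
  rw [hres]
  exact mul_ne_zero (pow_ne_zero _ h.coeff_left_ne_zero) (resultant_ne_zero _ _ hcoprime)

lemma implicitResultant_ne_zero (h : NondegenerateTriple A B D u) :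
    implicitResultant A B D u ≠ 0 := by
  obtain ⟨κ, hκ, hcoeff⟩ := h.exists_coeff_implicitResultant_eq_C
  intro hzero
  exact hκ (C_eq_zero.1 (by rw [← hcoeff, hzero, coeff_zero]))

lemma coeff_implicitResultant_left_ne_zero (h : NondegenerateTriple A B D u) :
    ((implicitResultant A B D u).coeff A.natTrailingDegree).coeff 0 ≠ 0 := by
  have hlow := coeff_resultant_pencil_natTrailingDegree_ne_zero h.left_ne_zero h.coeff_zero_right
    h.coeff_zero_mid h.left_right h.natDegree_right_lt.le h.natDegree_mid_lt.le
  rwa [h.natDegree_left, ← map_evalRingHom_implicitResultant, coeff_map, coe_evalRingHom,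
    ← coeff_zero_eq_eval_zero] at hlow

lemma coeff_implicitResultant_right_ne_zero (h : NondegenerateTriple A B D u) :
    ((implicitResultant A B D u).coeff 0).coeff D.natTrailingDegree ≠ 0 := by
  have hlead : (pencil A B (X : F[X])).coeff u = C (A.coeff u) := by
    simp [coeff_eq_zero_of_natDegree_lt h.natDegree_mid_lt]
  obtain ⟨k, hk⟩ := Nat.exists_eq_add_of_le h.natDegree_right_lt.le
  have hres : (implicitResultant A B D u).coeff 0 = C ((-1) ^ (u * u) *
      ((-1) ^ (u * k) * A.coeff u ^ k)) *
        resultant (D.map C) (pencil A B (X : F[X])) D.natDegree u := by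
    have hdeg := resultant_add_left_deg (D.map C) (pencil A B (X : F[X])) D.natDegree u k
      natDegree_map_le
    rw [← hk, hlead] at hdeg
    rw [coeff_zero_implicitResultant, resultant_comm, hdeg]
    simp [mul_assoc]
  rw [hres, coeff_C_mul]
  refine mul_ne_zero (by simp [h.coeff_left_ne_zero]) ?_
  exact coeff_resultant_pencil_natTrailingDegree_ne_zero h.right_ne_zero h.coeff_zero_left
    h.coeff_zero_mid h.left_right.symm h.natDegree_left.le h.natDegree_mid_lt.le

end NondegenerateTriple

section GaussLemma

variable {R K : Type*} [CommRing R] [IsDomain R] [IsGCDMonoid R] [Field K] [Algebra R K]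
  [IsFractionRing R K]

open scoped nonZeroDivisors in
lemma exists_isPrimitive_map_eq_C_leadingCoeff_mul {p : K[X]} (hp : p.Monic) :
    ∃ H : R[X], H.IsPrimitive ∧
      H.map (algebraMap R K) = C (algebraMap R K H.leadingCoeff) * p := by
  let : NormalizedGCDMonoid R := Nonempty.some inferInstance
  obtain ⟨b, -, hbp⟩ := IsLocalization.integerNormalization_spec R⁰ p
  set g := IsLocalization.integerNormalization R⁰ p
  have hg : g ≠ 0 := (IsFractionRing.integerNormalization_eq_zero_iff).not.2 hp.ne_zero
  have hcontent : algebraMap R K g.content ≠ 0 := by simpa [content_eq_zero_iff] using hg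
  refine ⟨g.primPart, g.isPrimitive_primPart, ?_⟩
  obtain ⟨a, ha⟩ : ∃ a : K, g.primPart.map (algebraMap R K) = C a * p := by
    refine ⟨(algebraMap R K g.content)⁻¹ * algebraMap R K b, ?_⟩
    rw [g.eq_C_content_mul_primPart, Polynomial.map_mul, map_C, ← algebraMap_smul K b p,
      smul_eq_C_mul] at hbp
    rw [C_mul, mul_assoc, ← hbp, ← mul_assoc, ← C_mul, inv_mul_cancel₀ hcontent, C_1, one_mul]
  have hlead := congrArg leadingCoeff ha
  rw [leadingCoeff_map_of_injective (FaithfulSMul.algebraMap_injective R K), leadingCoeff_mul,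
    leadingCoeff_C, hp.leadingCoeff, mul_one] at hlead
  rw [ha, hlead]

lemma dvd_of_isPrimitive_of_map_dvd_map {p q : R[X]} (hp : p.IsPrimitive)
    (h : p.map (algebraMap R K) ∣ q.map (algebraMap R K)) : p ∣ q := by
  obtain ⟨r, hr⟩ := h
  obtain ⟨s, rfl⟩ := hp.mul_map_mem_lifts_iff.1
    (⟨q, by rw [mul_comm, ← hr]; rfl⟩ : r * p.map (algebraMap R K) ∈ lifts (algebraMap R K))
  refine ⟨s, map_injective _ (FaithfulSMul.algebraMap_injective R K) ?_⟩
  rw [hr, Polynomial.map_mul, coe_mapRingHom]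

end GaussLemma

lemma NoCommonNonzeroRoot.exists_eq_C_mul_X_pow {F : Type*} [Field F] [IsAlgClosed F]
    {p q r : F[X]} (h : NoCommonNonzeroRoot p q) (hr : r ≠ 0) (hrp : r ∣ p) (hrq : r ∣ q) :
    ∃ c ≠ 0, ∃ n, r = C c * X ^ n := by
  obtain ⟨r', hr', hr'₀⟩ := exists_eq_X_pow_natTrailingDegree_mul hr
  have hdvd : r' ∣ r := hr' ▸ dvd_mul_left r' _
  have hself : NoCommonNonzeroRoot r' r' :=
    ((h.of_dvd_left (hdvd.trans hrp)).symm.of_dvd_left (hdvd.trans hrq))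
  obtain ⟨c, hc, hcr'⟩ := Polynomial.isUnit_iff.1 (isCoprime_self.1 (hself.isCoprime hr'₀))
  exact ⟨c, hc.ne_zero, _, by rw [hr', ← hcr', mul_comm]⟩

section CrossDifference

variable {R : Type*} [CommRing R]

/-- The polynomial `A(s) B(t) - A(t) B(s)` in `s` over `R[t]`; it expresses that `A / B` takes the
same value at `s` and at `t`. -/
noncomputable def crossDifference (A B : R[X]) : R[X][X] :=
  C B * A.map C - C A * B.map C

@[simp]
lemma coeff_crossDifference (A B : R[X]) (l : ℕ) :
    (crossDifference A B).coeff l = B * C (A.coeff l) - A * C (B.coeff l) := by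
  simp [crossDifference]

lemma leadingCoeff_crossDifference [IsDomain R] {A B : R[X]} (hB : B ≠ 0)
    (h : B.natDegree < A.natDegree) :
    (crossDifference A B).leadingCoeff = B * C A.leadingCoeff := by
  have hA : A ≠ 0 := ne_zero_of_natDegree_gt h
  have htop : (crossDifference A B).coeff A.natDegree = B * C A.leadingCoeff := by
    simp [coeff_eq_zero_of_natDegree_lt h]
  have hdeg : (crossDifference A B).natDegree = A.natDegree := by
    refine natDegree_eq_of_le_of_coeff_ne_zero ((natDegree_sub_le _ _).trans (max_le ?_ ?_)) ?_
    · exact (natDegree_C_mul_le _ _).trans natDegree_map_le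
    · exact (natDegree_C_mul_le _ _).trans (natDegree_map_le.trans h.le)
    · simp [htop, hA, hB]
  rw [leadingCoeff, hdeg, htop]

variable {F : Type*} [Field F] {A B : F[X]}

lemma minpoly_dvd_pencil {K : Type*} [Field K] [Algebra F K] {L : IntermediateField F K} {t : K}
    (hB : aeval t B ≠ 0) (hx : aeval t A / aeval t B ∈ L) :
    minpoly L t ∣ pencil A B (⟨_, hx⟩ : L) :=
  minpoly.dvd _ _ (by simp [pencil, hB])

lemma aeval_mul_aeval_eq_of_isConjRoot {K : Type*} [Field K] [Algebra F K]
    {L : IntermediateField F K} {s t : K} (hB : aeval t B ≠ 0) (hx : aeval t A / aeval t B ∈ L)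
    (h : IsConjRoot L t s) : aeval s A * aeval t B = aeval t A * aeval s B := by
  have hs := aeval_eq_zero_of_dvd_aeval_eq_zero (minpoly_dvd_pencil hB hx) h.aeval_eq_zero
  simp only [pencil, map_sub, map_mul, aeval_map_algebraMap, aeval_C,
    IntermediateField.algebraMap_apply] at hs
  field_simp at hs
  linear_combination hs

lemma minpoly_map_dvd_crossDifference_map {L : IntermediateField F (RatFunc F)} (hB : B ≠ 0)
    (hx : algebraMap F[X] (RatFunc F) A / algebraMap F[X] (RatFunc F) B ∈ L) :
    (minpoly L (RatFunc.X : RatFunc F)).map (algebraMap L (RatFunc F)) ∣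
      (crossDifference A B).map (algebraMap F[X] (RatFunc F)) := by
  rw [← RatFunc.aeval_X_left_eq_algebraMap, ← RatFunc.aeval_X_left_eq_algebraMap] at hx
  have hB' : aeval (RatFunc.X : RatFunc F) B ≠ 0 := by simpa
  have heq : (crossDifference A B).map (algebraMap F[X] (RatFunc F)) =
      C (algebraMap F[X] (RatFunc F) B) *
        (pencil A B (⟨_, hx⟩ : L)).map (algebraMap L (RatFunc F)) := by
    ext1 l
    simp [mul_sub, ← mul_assoc, mul_div_cancel₀, hB]
  rw [heq]
  exact (Polynomial.map_dvd _ (minpoly_dvd_pencil hB' hx)).mul_left _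

end CrossDifference

namespace NondegenerateTriple

variable {F : Type*} [Field F] {A B D : F[X]} {u : ℕ} {L : IntermediateField F (RatFunc F)}

lemma isIntegral_X (h : NondegenerateTriple A B D u)
    (hx : algebraMap F[X] (RatFunc F) A / algebraMap F[X] (RatFunc F) B ∈ L) :
    IsIntegral L (RatFunc.X : RatFunc F) := by
  refine IsAlgebraic.isIntegral ⟨pencil A B (⟨_, hx⟩ : L), fun hzero => ?_, ?_⟩
  · have hlead := congrArg (coeff · u) hzero
    simp [coeff_eq_zero_of_natDegree_lt h.natDegree_mid_lt, h.coeff_left_ne_zero] at hlead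
  · simp [pencil, h.mid_ne_zero]

variable [IsAlgClosed F]

lemma isCoprime_right_mid (h : NondegenerateTriple A B D u) : IsCoprime D B :=
  (h.right_mid.symm.isCoprime h.coeff_zero_mid).symm

lemma isCoprime_left_mid (h : NondegenerateTriple A B D u) : IsCoprime A B :=
  (h.left_mid.symm.isCoprime h.coeff_zero_mid).symm

lemma leadingCoeff_eq_C_of_dvd_crossDifference (h : NondegenerateTriple A B D u) {H : F[X][X]}
    (hAB : H ∣ crossDifference A B) (hAD : H ∣ crossDifference A D) :
    ∃ κ, H.leadingCoeff = C κ := by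
  have hA : IsUnit (C A.leadingCoeff) := isUnit_C.2 (leadingCoeff_ne_zero.2 h.left_ne_zero).isUnit
  have dvd_of_dvd {f : F[X]} (hf₀ : f ≠ 0) (hf : f.natDegree < u) (hAf : H ∣ crossDifference A f) :
      H.leadingCoeff ∣ f := by
    have := leadingCoeff_dvd_leadingCoeff hAf
    rwa [leadingCoeff_crossDifference hf₀ (by rwa [h.natDegree_left]), hA.dvd_mul_right] at this
  obtain ⟨κ, -, hκ⟩ := Polynomial.isUnit_iff.1 <| h.isCoprime_right_mid.isUnit_of_dvd'
    (dvd_of_dvd h.right_ne_zero h.natDegree_right_lt hAD)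
    (dvd_of_dvd h.mid_ne_zero h.natDegree_mid_lt hAB)
  exact ⟨κ, hκ.symm⟩

lemma coeff_zero_eq_C_mul_X_pow_of_dvd_crossDifference (h : NondegenerateTriple A B D u)
    {H : F[X][X]} (hAB : H ∣ crossDifference A B) (hDB : H ∣ crossDifference D B) :
    ∃ c ≠ 0, ∃ n, H.coeff 0 = C c * X ^ n := by
  have hB : IsUnit (C (B.coeff 0)) := isUnit_C.2 h.coeff_zero_mid.isUnit
  have dvd_of_dvd {f : F[X]} (hf : f.coeff 0 = 0) (hfB : H ∣ crossDifference f B) :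
      H.coeff 0 ∣ f := by
    have hdvd := _root_.map_dvd (constantCoeff (R := F[X])) hfB
    rwa [constantCoeff_apply, constantCoeff_apply, coeff_crossDifference, hf, C_0, mul_zero,
      zero_sub, dvd_neg, hB.dvd_mul_right] at hdvd
  have hA := dvd_of_dvd h.coeff_zero_left hAB
  exact h.left_right.exists_eq_C_mul_X_pow (ne_zero_of_dvd_ne_zero h.left_ne_zero hA) hA
    (dvd_of_dvd h.coeff_zero_right hDB)

-- `H` is the minimal polynomial of `t` over `L`, cleared of denominators: by Gauss's lemma it
-- divides `A(s) B(t) - A(t) B(s)` and its analogues, so its leading coefficient is constant and its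
-- constant coefficient is a power of `t`, up to a scalar.
lemma exists_map_eq_C_mul_minpoly_map (h : NondegenerateTriple A B D u)
    (hx : algebraMap F[X] (RatFunc F) A / algebraMap F[X] (RatFunc F) B ∈ L)
    (hz : algebraMap F[X] (RatFunc F) D / algebraMap F[X] (RatFunc F) B ∈ L) :
    ∃ (H : F[X][X]) (κ c : F) (n : ℕ), c ≠ 0 ∧ H.coeff 0 = C c * X ^ n ∧
      H.map (algebraMap F[X] (RatFunc F)) = C (RatFunc.C κ) *
        (minpoly L (RatFunc.X : RatFunc F)).map (algebraMap L (RatFunc F)) := by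
  obtain ⟨H, hprim, hH⟩ := exists_isPrimitive_map_eq_C_leadingCoeff_mul (R := F[X])
    ((minpoly.monic (h.isIntegral_X hx)).map (algebraMap L (RatFunc F)))
  have hlead : algebraMap F[X] (RatFunc F) H.leadingCoeff ≠ 0 := by simpa using hprim.ne_zero
  have dvd_crossDifference {f g : F[X]} (hg : g ≠ 0)
      (hfg : algebraMap F[X] (RatFunc F) f / algebraMap F[X] (RatFunc F) g ∈ L) :
      H ∣ crossDifference f g := by
    refine dvd_of_isPrimitive_of_map_dvd_map (K := RatFunc F) hprim ?_
    rw [hH, (isUnit_C.2 hlead.isUnit).mul_left_dvd]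
    exact minpoly_map_dvd_crossDifference_map hg hfg
  have hAD : algebraMap F[X] (RatFunc F) A / algebraMap F[X] (RatFunc F) D ∈ L := by
    have hB : algebraMap F[X] (RatFunc F) B ≠ 0 := by simpa using h.mid_ne_zero
    simpa [div_div_div_cancel_right₀ hB] using div_mem hx hz
  obtain ⟨κ, hκ⟩ := h.leadingCoeff_eq_C_of_dvd_crossDifference
    (dvd_crossDifference h.mid_ne_zero hx) (dvd_crossDifference h.right_ne_zero hAD)
  obtain ⟨c, hc, n, hcn⟩ := h.coeff_zero_eq_C_mul_X_pow_of_dvd_crossDifference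
    (dvd_crossDifference h.mid_ne_zero hx) (dvd_crossDifference h.mid_ne_zero hz)
  exact ⟨H, κ, c, n, hc, hcn, by rw [hH, hκ, RatFunc.algebraMap_C]⟩

lemma exists_X_pow_mem (h : NondegenerateTriple A B D u)
    (hx : algebraMap F[X] (RatFunc F) A / algebraMap F[X] (RatFunc F) B ∈ L)
    (hz : algebraMap F[X] (RatFunc F) D / algebraMap F[X] (RatFunc F) B ∈ L) :
    ∃ n ≠ 0, (RatFunc.X : RatFunc F) ^ n ∈ L := by
  obtain ⟨H, κ, c, n, hc, hcn, hH⟩ := h.exists_map_eq_C_mul_minpoly_map hx hz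
  refine ⟨n, ?_, ?_⟩
  · rintro rfl
    have hroot : H.eval X = 0 := by
      refine IsFractionRing.injective F[X] (RatFunc F) ?_
      rw [← eval₂_hom, ← eval_map, hH, RatFunc.algebraMap_X]
      simp
    have hX : X ∣ H.coeff 0 := by
      simpa [hroot, ← coeff_zero_eq_eval_zero] using sub_dvd_eval_sub X 0 H
    simp [hcn, X_dvd_iff, hc] at hX
  · have hcoeff := congrArg (coeff · 0) hH
    simp only [coeff_map, coeff_C_mul, hcn, map_mul, map_pow, RatFunc.algebraMap_X,
      RatFunc.algebraMap_C] at hcoeff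
    have hpow : (RatFunc.X : RatFunc F) ^ n =
        RatFunc.C (c⁻¹ * κ) *
          algebraMap L (RatFunc F) ((minpoly L (RatFunc.X : RatFunc F)).coeff 0) := by
      have hc' : (RatFunc.C c : RatFunc F) ≠ 0 := by simpa using hc
      rw [map_mul, map_inv₀, mul_assoc, ← hcoeff, inv_mul_cancel_left₀ hc']
    rw [hpow]
    exact mul_mem (L.algebraMap_mem _) (SetLike.coe_mem _)

end NondegenerateTriple

section Scaling

lemma pow_eq_one_of_comp_C_mul_X_eq {R : Type*} [CommRing R] [IsDomain R] {p : R[X]} {ζ : R}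
    (h : p.comp (C ζ * X) = p) {s : ℕ} (hs : p.coeff s ≠ 0) : ζ ^ s = 1 := by
  have hcoeff := congrArg (coeff · s) h
  simpa [hs] using hcoeff

lemma comp_C_mul_X_eq_of_mul_eq {F : Type*} [Field F] {A B : F[X]} {ζ : F} (hAB : IsCoprime A B)
    (hB : B.coeff 0 ≠ 0) (hA : A ≠ 0)
    (h : A.comp (C ζ * X) * B = A * B.comp (C ζ * X)) :
    A.comp (C ζ * X) = A ∧ B.comp (C ζ * X) = B := by
  obtain ⟨k, hk⟩ : A ∣ A.comp (C ζ * X) :=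
    hAB.dvd_of_dvd_mul_right (h ▸ dvd_mul_right _ _)
  have hkB : k * B = B.comp (C ζ * X) := mul_left_cancel₀ hA (by rw [← h, hk, mul_assoc])
  have hk₀ : k.coeff 0 = 1 := by
    have hcoeff := congrArg (coeff · 0) hkB
    simpa [hB] using hcoeff
  have hk_ne : k ≠ 0 := by rintro rfl; simp at hk₀
  have hdeg : k.natDegree = 0 := by
    have hle : (A.comp (C ζ * X)).natDegree ≤ A.natDegree :=
      natDegree_comp_le.trans (mul_le_of_le_one_right' (by compute_degree))
    rw [hk, natDegree_mul hA hk_ne] at hle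
    omega
  have hk_one : k = 1 := by rw [eq_C_of_natDegree_eq_zero hdeg, hk₀, C_1]
  exact ⟨by rw [hk, hk_one, mul_one], by rw [← hkB, hk_one, one_mul]⟩

end Scaling

lemma exists_eq_C_mul_X_of_pow_eq_X_pow {F : Type*} [Field F] [IsAlgClosed F] {n : ℕ} (hn : n ≠ 0)
    {s : RatFunc F} (h : s ^ n = RatFunc.X ^ n) :
    ∃ ζ : F, s = algebraMap F[X] (RatFunc F) (C ζ * X) := by
  have hroot : ((X ^ n - C 1 : F[X]).map (algebraMap F (RatFunc F))).IsRoot (s / RatFunc.X) := by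
    simp [div_pow, h, RatFunc.X_ne_zero]
  obtain ⟨ζ, hζ⟩ := Splits.mem_range_of_isRoot (IsAlgClosed.splits _)
    (X_pow_sub_C_ne_zero (Nat.pos_of_ne_zero hn) _) hroot
  refine ⟨ζ, ?_⟩
  rw [map_mul, RatFunc.algebraMap_C, RatFunc.algebraMap_X, ← RatFunc.algebraMap_eq_C, hζ,
    div_mul_cancel₀ _ RatFunc.X_ne_zero]

namespace NondegenerateTriple

variable {F : Type*} [Field F] [IsAlgClosed F] {A B D : F[X]} {u : ℕ}
  {L : IntermediateField F (RatFunc F)}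

lemma eq_one_of_mul_comp_eq (h : NondegenerateTriple A B D u) {ζ : F}
    (hAB : A.comp (C ζ * X) * B = A * B.comp (C ζ * X))
    (hDB : D.comp (C ζ * X) * B = D * B.comp (C ζ * X)) : ζ = 1 := by
  obtain ⟨hA, hB⟩ :=
    comp_C_mul_X_eq_of_mul_eq h.isCoprime_left_mid h.coeff_zero_mid h.left_ne_zero hAB
  have hD := mul_right_cancel₀ h.mid_ne_zero (hB ▸ hDB)
  have hord := h.eq_one_of_dvd_exponents (orderOf ζ)
    (fun _ hs => orderOf_dvd_of_pow_eq_one (pow_eq_one_of_comp_C_mul_X_eq hA hs))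
    (fun _ hs => orderOf_dvd_of_pow_eq_one (pow_eq_one_of_comp_C_mul_X_eq hB hs))
    (fun _ hs => orderOf_dvd_of_pow_eq_one (pow_eq_one_of_comp_C_mul_X_eq hD hs))
  exact orderOf_eq_one_iff.1 hord

theorem X_mem [CharZero F] (h : NondegenerateTriple A B D u)
    (hx : algebraMap F[X] (RatFunc F) A / algebraMap F[X] (RatFunc F) B ∈ L)
    (hz : algebraMap F[X] (RatFunc F) D / algebraMap F[X] (RatFunc F) B ∈ L) :
    (RatFunc.X : RatFunc F) ∈ L := by
  obtain ⟨n, hn, hXn⟩ := h.exists_X_pow_mem hx hz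
  have hdvd : minpoly L (RatFunc.X : RatFunc F) ∣ X ^ n - C (⟨_, hXn⟩ : L) :=
    minpoly.dvd _ _ (by simp)
  have hsplits : ((minpoly L (RatFunc.X : RatFunc F)).map (algebraMap L (RatFunc F))).Splits := by
    have : NeZero (n : F) := ⟨Nat.cast_ne_zero.2 hn⟩
    have hζ := (HasEnoughRootsOfUnity.exists_primitiveRoot F n).choose_spec.map_of_injective
      (algebraMap F (RatFunc F)).injective
    have := X_pow_sub_C_splits_of_isPrimitiveRoot hζ (rfl : (RatFunc.X : RatFunc F) ^ n = _)
    refine this.of_dvd (X_pow_sub_C_ne_zero (Nat.pos_of_ne_zero hn) _) ?_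
    simpa using Polynomial.map_dvd (algebraMap L (RatFunc F)) hdvd
  by_contra hX
  obtain ⟨s, hs, hconj⟩ := (notMem_iff_exists_ne_and_isConjRoot
    (minpoly.irreducible (h.isIntegral_X hx)).separable hsplits).1
    (fun hbot => hX (by simpa [Algebra.mem_bot] using hbot))
  obtain ⟨ζ, rfl⟩ := exists_eq_C_mul_X_of_pow_eq_X_pow hn (s := s) (by
    have := aeval_eq_zero_of_dvd_aeval_eq_zero hdvd hconj.aeval_eq_zero
    simpa [sub_eq_zero] using this)
  have mul_comp_eq {f : F[X]}
      (hf : algebraMap F[X] (RatFunc F) f / algebraMap F[X] (RatFunc F) B ∈ L) :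
      f.comp (C ζ * X) * B = f * B.comp (C ζ * X) := by
    have := aeval_mul_aeval_eq_of_isConjRoot (A := f) (B := B) (by simpa using h.mid_ne_zero)
      (by simpa using hf) hconj
    refine IsFractionRing.injective F[X] (RatFunc F) ?_
    simpa only [aeval_algebraMap_apply, RatFunc.aeval_X_left_eq_algebraMap, ← map_mul,
      ← comp_eq_aeval] using this
  have hζ := h.eq_one_of_mul_comp_eq (mul_comp_eq hx) (mul_comp_eq hz)
  simp [hζ] at hs

end NondegenerateTriple

section VanishingIdeal

open IntermediateField

lemma resultant_eq_zero_of_eval_eq_zero {R : Type*} [CommRing R] {f g : R[X]} {m n : ℕ} {t : R}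
    (hf : f.natDegree ≤ m) (hg : g.natDegree ≤ n) (hm : m ≠ 0) (hft : f.eval t = 0)
    (hgt : g.eval t = 0) : resultant f g m n = 0 := by
  obtain ⟨p, q, -, -, h⟩ := exists_mul_add_mul_eq_C_resultant f g hf hg (Or.inl hm)
  simpa [hft, hgt] using (congrArg (eval t) h).symm

lemma aevalAeval_implicitResultant_eq_zero {R S : Type*} [CommRing R] [CommRing S] [Algebra R S]
    {A B D : R[X]} {u : ℕ} {x z t : S} (hA : A.natDegree ≤ u) (hB : B.natDegree ≤ u)
    (hD : D.natDegree ≤ u) (hu : u ≠ 0) (hx : aeval t A = x * aeval t B)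
    (hz : aeval t D = z * aeval t B) : aevalAeval x z (implicitResultant A B D u) = 0 := by
  rw [algHom_implicitResultant, aevalAeval_X, aevalAeval_Y]
  exact resultant_eq_zero_of_eval_eq_zero (natDegree_pencil_le hA hB x)
    (natDegree_pencil_le hD hB z) hu (t := t) (by simp [pencil, eval_map_algebraMap, hx])
    (by simp [pencil, eval_map_algebraMap, hz])

lemma aevalAeval_eq_eval₂ {R S : Type*} [CommSemiring R] [CommSemiring S] [Algebra R S] (x z : S)
    (f : R[X][X]) : aevalAeval x z f = f.eval₂ (aeval x : R[X] →ₐ[R] S) z := by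
  have h : ((aevalAeval x z : R[X][X] →ₐ[R] S) : R[X][X] →+* S) =
      eval₂RingHom (aeval x : R[X] →ₐ[R] S) z := by
    ext <;> simp
  exact congr($h f)

lemma finrank_le_natDegree_of_aevalAeval_eq_zero {F K : Type*} [Field F] [Field K] [Algebra F K]
    {x z : K} (hx : Transcendental F x) (hxz : F⟮x⟯⟮z⟯ = ⊤) {r : F[X][X]} (hr : r ≠ 0)
    (hrz : aevalAeval x z r = 0) : Module.finrank F⟮x⟯ K ≤ r.natDegree := by
  let g : F[X] →ₐ[F] F⟮x⟯ := aeval (AdjoinSimple.gen F x)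
  have hcomp : (algebraMap F⟮x⟯ K).comp (g : F[X] →+* F⟮x⟯) = (aeval x : F[X] →ₐ[F] K) := by
    ext <;> simp [g]
  have hg : Function.Injective (g : F[X] →+* F⟮x⟯) := by
    refine Function.Injective.of_comp (f := algebraMap F⟮x⟯ K) ?_
    rw [← RingHom.coe_comp, hcomp]
    exact transcendental_iff_injective.1 hx
  have hrg : r.map (g : F[X] →+* F⟮x⟯) ≠ 0 := (Polynomial.map_ne_zero_iff hg).2 hr
  have hroot : aeval z (r.map (g : F[X] →+* F⟮x⟯)) = 0 := by
    rw [aeval_def, eval₂_map, hcomp]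
    rwa [← aevalAeval_eq_eval₂]
  have hfinrank := adjoin.finrank (IsAlgebraic.isIntegral ⟨_, hrg, hroot⟩ : IsIntegral F⟮x⟯ z)
  rw [hxz, finrank_top'] at hfinrank
  calc Module.finrank F⟮x⟯ K = (minpoly F⟮x⟯ z).natDegree := hfinrank
    _ ≤ (r.map (g : F[X] →+* F⟮x⟯)).natDegree := natDegree_le_of_dvd (minpoly.dvd _ _ hroot) hrg
    _ ≤ r.natDegree := natDegree_map_le

lemma natDegree_le_natDegree_num_div {F : Type*} [Field F] {p q : F[X]} (h : IsCoprime p q)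
    (hp : p ≠ 0) (hq : q ≠ 0) :
    p.natDegree ≤ (algebraMap F[X] (RatFunc F) p / algebraMap F[X] (RatFunc F) q).num.natDegree :=
  natDegree_le_of_dvd
    (h.dvd_of_dvd_mul_right (Dvd.intro _ ((RatFunc.num_mul_eq_mul_denom_iff hq).2 rfl).symm))
    (RatFunc.num_ne_zero (by simp [hp, hq]))

namespace NondegenerateTriple

variable {F : Type*} [Field F] {A B D : F[X]} {u : ℕ}

lemma aevalAeval_implicitResultant (h : NondegenerateTriple A B D u) :
    aevalAeval (algebraMap F[X] (RatFunc F) A / algebraMap F[X] (RatFunc F) B)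
      (algebraMap F[X] (RatFunc F) D / algebraMap F[X] (RatFunc F) B)
      (implicitResultant A B D u) = 0 := by
  have hB : algebraMap F[X] (RatFunc F) B ≠ 0 := by simpa using h.mid_ne_zero
  refine aevalAeval_implicitResultant_eq_zero (t := RatFunc.X) h.natDegree_left.le
    h.natDegree_mid_lt.le h.natDegree_right_lt.le h.pos.ne' ?_ ?_ <;>
  rw [RatFunc.aeval_X_left_eq_algebraMap, RatFunc.aeval_X_left_eq_algebraMap, div_mul_cancel₀ _ hB]

variable [IsAlgClosed F]

lemma le_natDegree_num (h : NondegenerateTriple A B D u) :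
    u ≤ (algebraMap F[X] (RatFunc F) A / algebraMap F[X] (RatFunc F) B).num.natDegree :=
  h.natDegree_left.symm.trans_le
    (natDegree_le_natDegree_num_div h.isCoprime_left_mid h.left_ne_zero h.mid_ne_zero)

variable [CharZero F]

lemma le_natDegree_of_aevalAeval_eq_zero (h : NondegenerateTriple A B D u) {r : F[X][X]}
    (hr : r ≠ 0)
    (hrxz : aevalAeval (algebraMap F[X] (RatFunc F) A / algebraMap F[X] (RatFunc F) B)
      (algebraMap F[X] (RatFunc F) D / algebraMap F[X] (RatFunc F) B) r = 0) :
    u ≤ r.natDegree := by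
  set x := algebraMap F[X] (RatFunc F) A / algebraMap F[X] (RatFunc F) B
  set z := algebraMap F[X] (RatFunc F) D / algebraMap F[X] (RatFunc F) B
  have hnum : u ≤ x.num.natDegree := h.le_natDegree_num
  have hx : Transcendental F x := x.transcendental_of_ne_C <| by
    rintro ⟨c, hc⟩
    have := h.pos
    simp [hc] at hnum
    omega
  have htop : F⟮x⟯⟮z⟯ = ⊤ := by
    rw [← restrictScalars_eq_top_iff (K := F), eq_top_iff, ← RatFunc.adjoin_X,
      adjoin_simple_le_iff]
    exact h.X_mem (IntermediateField.algebraMap_mem F⟮x⟯⟮z⟯ (AdjoinSimple.gen F x))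
      (mem_adjoin_simple_self F⟮x⟯ z)
  calc u ≤ Module.finrank F⟮x⟯ (RatFunc F) := by
        rw [RatFunc.finrank_eq_max_natDegree]; exact le_max_of_le_left hnum
    _ ≤ r.natDegree := finrank_le_natDegree_of_aevalAeval_eq_zero hx htop hr hrxz

theorem implicitResultant_dvd (h : NondegenerateTriple A B D u) {f : F[X][X]}
    (hf : aevalAeval (algebraMap F[X] (RatFunc F) A / algebraMap F[X] (RatFunc F) B)
      (algebraMap F[X] (RatFunc F) D / algebraMap F[X] (RatFunc F) B) f = 0) :
    implicitResultant A B D u ∣ f := by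
  obtain ⟨κ, hκ, hcoeff⟩ := h.exists_coeff_implicitResultant_eq_C
  set M := C (C κ⁻¹) * implicitResultant A B D u with hM
  have hMdeg : M.natDegree ≤ u :=
    (natDegree_C_mul_le _ _).trans (natDegree_implicitResultant_le A B D u)
  have hMcoeff : M.coeff u = 1 := by
    rw [hM, coeff_C_mul, hcoeff, ← C_mul, inv_mul_cancel₀ hκ, C_1]
  have hmonic : M.Monic := monic_of_natDegree_le_of_coeff_eq_one u hMdeg hMcoeff
  have hM1 : M ≠ 1 := fun h1 => by
    rw [h1, coeff_one, if_neg h.pos.ne'] at hMcoeff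
    exact zero_ne_one hMcoeff
  have hrem : aevalAeval (algebraMap F[X] (RatFunc F) A / algebraMap F[X] (RatFunc F) B)
      (algebraMap F[X] (RatFunc F) D / algebraMap F[X] (RatFunc F) B) (f %ₘ M) = 0 := by
    rw [modByMonic_eq_sub_mul_div f M, map_sub, hf, hM, map_mul, map_mul,
      h.aevalAeval_implicitResultant, mul_zero, zero_mul, sub_zero]
  have hMf : M ∣ f := by
    rw [← modByMonic_eq_zero_iff_dvd hmonic]
    by_contra hr
    exact ((natDegree_modByMonic_lt f hmonic hM1).trans_le hMdeg).not_ge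
      (h.le_natDegree_of_aevalAeval_eq_zero hr hrem)
  exact (dvd_mul_left _ _).trans hMf

end NondegenerateTriple

end VanishingIdeal

section Dehomogenization

variable {R σ τ : Type*} [CommRing R] {g : τ → σ} (hg : Function.Injective g)

/-- Dehomogenization: the variables outside the range of `g` are set to `1` and the variable `g s`
becomes the variable `s`, so on exponents it is the restriction along `g`. -/
noncomputable def dehomogenize : MvPolynomial σ R →ₐ[R] MvPolynomial τ R :=
  AddMonoidAlgebra.mapDomainAlgHom R R (Finsupp.comapDomain.addMonoidHom hg)

lemma dehomogenize_monomial (D : σ →₀ ℕ) (r : R) :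
    dehomogenize hg (MvPolynomial.monomial D r) =
      MvPolynomial.monomial (D.comapDomain g hg.injOn) r := by
  simp [dehomogenize, MvPolynomial.monomial]

lemma dehomogenize_X_apply (t : τ) :
    dehomogenize hg (MvPolynomial.X (g t) : MvPolynomial σ R) = MvPolynomial.X t := by
  rw [MvPolynomial.X, dehomogenize_monomial, Finsupp.comapDomain_single, MvPolynomial.X]

lemma dehomogenize_X_of_notMem_range {s : σ} (hs : s ∉ Set.range g) :
    dehomogenize hg (MvPolynomial.X s : MvPolynomial σ R) = 1 := by
  have hzero : (Finsupp.single s 1).comapDomain g hg.injOn = 0 := by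
    ext t
    exact Finsupp.single_eq_of_ne fun h => hs ⟨t, h⟩
  rw [MvPolynomial.X, dehomogenize_monomial, hzero, MvPolynomial.monomial_zero', map_one]

lemma aeval_dehomogenize {S : Type*} [CommRing S] [Algebra R S] (v : τ → S)
    (G : MvPolynomial σ R) :
    MvPolynomial.aeval v (dehomogenize hg G) = MvPolynomial.aeval (Function.extend g v 1) G := by
  suffices h : (MvPolynomial.aeval v).comp (dehomogenize hg) =
      (MvPolynomial.aeval (Function.extend g v 1) : MvPolynomial σ R →ₐ[R] S) from congr($h G)
  ext s
  rw [AlgHom.comp_apply, MvPolynomial.aeval_X]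
  by_cases hs : s ∈ Set.range g
  · obtain ⟨t, rfl⟩ := hs
    rw [dehomogenize_X_apply, MvPolynomial.aeval_X, hg.extend_apply]
  · rw [dehomogenize_X_of_notMem_range hg hs, map_one, Function.extend_apply' _ _ _ hs,
      Pi.one_apply]

lemma comapDomain_mapDomain_add_single {j : σ} (hj : j ∉ Set.range g) (d : τ →₀ ℕ) (m : ℕ) :
    (d.mapDomain g + Finsupp.single j m).comapDomain g hg.injOn = d := by
  ext t
  have hjt : g t ≠ j := fun h => hj ⟨t, h⟩
  rw [Finsupp.comapDomain_apply, Finsupp.add_apply, Finsupp.mapDomain_apply hg,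
    Finsupp.single_eq_of_ne hjt, add_zero]

variable {j : σ} (hj : Set.range g = {j}ᶜ)

include hj

lemma mapDomain_comapDomain_add_single (D : σ →₀ ℕ) :
    (D.comapDomain g hg.injOn).mapDomain g + Finsupp.single j (D j) = D := by
  ext s
  rw [Finsupp.add_apply]
  by_cases hs : s = j
  · subst hs
    rw [Finsupp.mapDomain_of_notMem_range, Finsupp.single_eq_same, zero_add]
    simp [hj]
  · obtain ⟨t, rfl⟩ : s ∈ Set.range g := hj ▸ hs
    rw [Finsupp.mapDomain_apply hg, Finsupp.comapDomain_apply, Finsupp.single_eq_of_ne hs,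
      add_zero]

lemma degree_eq_degree_comapDomain_add (D : σ →₀ ℕ) :
    D.degree = (D.comapDomain g hg.injOn).degree + D j := by
  conv_lhs => rw [← mapDomain_comapDomain_add_single hg hj D]
  rw [map_add, Finsupp.degree_mapDomain, Finsupp.degree_single]

lemma injOn_comapDomain_degree (n : ℕ) :
    Set.InjOn (fun D : σ →₀ ℕ => D.comapDomain g hg.injOn) {D | D.degree = n} := by
  intro D hD E hE h
  have hDE : D j = E j := by
    have hD' := degree_eq_degree_comapDomain_add hg hj D
    have hE' := degree_eq_degree_comapDomain_add hg hj E
    simp only [Set.mem_ofPred_eq] at hD hE h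
    rw [h] at hD'
    lia
  rw [← mapDomain_comapDomain_add_single hg hj D, ← mapDomain_comapDomain_add_single hg hj E,
    hDE]
  exact congrArg (fun d : τ →₀ ℕ => d.mapDomain g + Finsupp.single j (E j)) h

lemma support_dehomogenize [DecidableEq τ] {n : ℕ} {G : MvPolynomial σ R} (hG : G.IsHomogeneous n) :
    (dehomogenize hg G).support = G.support.image (fun D => D.comapDomain g hg.injOn) :=
  Finsupp.mapDomain_support_of_injOn _ ((injOn_comapDomain_degree hg hj n).mono fun _ hD =>
    (MvPolynomial.IsHomogeneous.degree_eq_sum_deg_support hG hD).symm)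

lemma dehomogenize_injOn_isHomogeneous (n : ℕ) :
    Set.InjOn (dehomogenize (R := R) hg) {G | G.IsHomogeneous n} := by
  classical
  intro G hG H hH h
  have hsupp := support_dehomogenize hg hj (MvPolynomial.IsHomogeneous.sub hG hH)
  rw [map_sub, sub_eq_zero.2 h, MvPolynomial.support_zero, eq_comm, Finset.image_eq_empty,
    MvPolynomial.support_eq_empty] at hsupp
  exact sub_eq_zero.1 hsupp

lemma exists_isHomogeneous_dehomogenize_eq (f : MvPolynomial τ R) :
    ∃ G : MvPolynomial σ R, G.IsHomogeneous f.totalDegree ∧ dehomogenize hg G = f := by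
  refine ⟨∑ d ∈ f.support, MvPolynomial.monomial
    (d.mapDomain g + Finsupp.single j (f.totalDegree - d.degree)) (f.coeff d),
    MvPolynomial.IsHomogeneous.sum _ _ _ fun d hd =>
      MvPolynomial.isHomogeneous_monomial _ ?_, ?_⟩
  · rw [map_add, Finsupp.degree_mapDomain, Finsupp.degree_single]
    exact Nat.add_sub_cancel' (MvPolynomial.le_totalDegree hd)
  · have hjr : j ∉ Set.range g := by simp [hj]
    simp only [map_sum, dehomogenize_monomial, comapDomain_mapDomain_add_single hg hjr]
    exact f.support_sum_monomial_coeff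

lemma not_X_dvd_of_isHomogeneous_totalDegree {f : MvPolynomial τ R} (hf : f ≠ 0)
    {G : MvPolynomial σ R} (hG : G.IsHomogeneous f.totalDegree) (hGf : dehomogenize hg G = f) :
    ¬ MvPolynomial.X j ∣ G := by
  classical
  intro hX
  obtain ⟨d, hd, hdeg⟩ := f.support.exists_mem_eq_sup (MvPolynomial.support_nonempty.2 hf)
    fun d => d.sum fun _ e => e
  obtain ⟨D, hD, rfl⟩ : ∃ D ∈ G.support, D.comapDomain g hg.injOn = d := by
    rwa [← hGf, support_dehomogenize hg hj hG, Finset.mem_image] at hd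
  have hDdeg : f.totalDegree = D.degree := hG.degree_eq_sum_deg_support hD
  have hDj : D j = 0 := by
    have := degree_eq_degree_comapDomain_add hg hj D
    have : f.totalDegree = (D.comapDomain g hg.injOn).degree := hdeg
    lia
  rw [MvPolynomial.X_dvd_iff_modMonomial_eq_zero] at hX
  refine MvPolynomial.mem_support_iff.1 hD ?_
  rw [← MvPolynomial.coeff_modMonomial_of_not_le G (s := Finsupp.single j 1), hX,
    MvPolynomial.coeff_zero]
  simp [hDj]

end Dehomogenization

theorem dvd_of_dehomogenize_dvd {F σ τ : Type*} [Field F] {g : τ → σ} (hg : Function.Injective g)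
    {j : σ} (hj : Set.range g = {j}ᶜ) {m n : ℕ} {G H : MvPolynomial σ F} (hG : G.IsHomogeneous m)
    (hH : H.IsHomogeneous n) (hX : ¬ MvPolynomial.X j ∣ G)
    (h : dehomogenize hg G ∣ dehomogenize hg H) : G ∣ H := by
  obtain ⟨q, hq⟩ := h
  obtain ⟨Q, hQ, rfl⟩ := exists_isHomogeneous_dehomogenize_eq hg hj q
  set l := (dehomogenize hg Q).totalDegree
  have hXj (e : ℕ) : dehomogenize hg (MvPolynomial.X j ^ e : MvPolynomial σ F) = 1 := by
    rw [map_pow, dehomogenize_X_of_notMem_range hg (by simp [hj]), one_pow]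
  have hmul : MvPolynomial.X j ^ (m + l) * H = MvPolynomial.X j ^ n * (G * Q) := by
    refine dehomogenize_injOn_isHomogeneous hg hj (m + l + n)
      ((MvPolynomial.isHomogeneous_X_pow j (m + l)).mul hH) ?_ ?_
    · rw [add_comm]
      exact (MvPolynomial.isHomogeneous_X_pow j n).mul (hG.mul hQ)
    · rw [map_mul, map_mul, map_mul, hXj, hXj, one_mul, one_mul, hq]
  have hrel : IsRelPrime G (MvPolynomial.X j ^ (m + l)) :=
    ((MvPolynomial.X_prime.irreducible.isRelPrime_iff_not_dvd.2 hX).symm).pow_right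
  exact hrel.dvd_of_dvd_mul_left ⟨MvPolynomial.X j ^ n * Q, by rw [hmul]; ring⟩

section HomogeneousRelations

variable {F σ S S' : Type*} [Field F] [CommRing S] [Algebra F S] [CommRing S'] [Algebra F S']
  {n : ℕ} {G : MvPolynomial σ F}

lemma aeval_mul_of_isHomogeneous (hG : G.IsHomogeneous n) (s : S) (v : σ → S) :
    MvPolynomial.aeval (fun l => s * v l) G = s ^ n * MvPolynomial.aeval v G := by
  rw [MvPolynomial.aeval_def, MvPolynomial.aeval_def, MvPolynomial.eval₂_eq, MvPolynomial.eval₂_eq,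
    Finset.mul_sum]
  refine Finset.sum_congr rfl fun D hD => ?_
  simp only [mul_pow, Finset.prod_mul_distrib, Finset.prod_pow_eq_pow_sum,
    ← hG.degree_eq_sum_deg_support hD]
  ring

lemma aeval_mul_algHom_eq_zero_iff [NoZeroDivisors S'] (hG : G.IsHomogeneous n) {s : S'}
    (hs : s ≠ 0) {ψ : S →ₐ[F] S'} (hψ : Function.Injective ψ) (v : σ → S) :
    MvPolynomial.aeval (fun l => s * ψ (v l)) G = 0 ↔ MvPolynomial.aeval v G = 0 := by
  rw [aeval_mul_of_isHomogeneous hG, mul_eq_zero_iff_left (pow_ne_zero n hs),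
    ← map_eq_zero_iff ψ hψ, MvPolynomial.comp_aeval_apply]

lemma aeval_dehomogenize_div_eq_zero_iff {K τ : Type*} [Field K] [Algebra F K] {g : τ → σ}
    (hg : Function.Injective g) {j : σ} (hj : Set.range g = {j}ᶜ) (hG : G.IsHomogeneous n)
    {w : σ → K} (hw : w j ≠ 0) :
    MvPolynomial.aeval (fun t => w (g t) / w j) (dehomogenize hg G) = 0 ↔
      MvPolynomial.aeval w G = 0 := by
  have hextend : Function.extend g (fun t => w (g t) / w j) 1 = fun l => (w j)⁻¹ * w l := by
    ext l
    by_cases hl : l ∈ Set.range g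
    · obtain ⟨t, rfl⟩ := hl
      rw [hg.extend_apply, div_eq_inv_mul]
    · have hlj : l = j := by simpa [hj] using hl
      rw [Function.extend_apply' _ _ _ hl, hlj, inv_mul_cancel₀ hw, Pi.one_apply]
  rw [aeval_dehomogenize, hextend]
  exact aeval_mul_algHom_eq_zero_iff hG (inv_ne_zero hw) (ψ := AlgHom.id F K)
    Function.injective_id w

lemma aeval_dehomogenize_div_algebraMap_eq_zero_iff {K τ : Type*} [Field K] [Algebra F K]
    [Algebra S K] [IsScalarTower F S K] [FaithfulSMul S K] {g : τ → σ} (hg : Function.Injective g)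
    {j : σ} (hj : Set.range g = {j}ᶜ) {v : σ → S} (hvj : v j ≠ 0) (hG : G.IsHomogeneous n) :
    MvPolynomial.aeval (fun t => algebraMap S K (v (g t)) / algebraMap S K (v j))
      (dehomogenize hg G) = 0 ↔ MvPolynomial.aeval v G = 0 := by
  have hι : Function.Injective (algebraMap S K) := FaithfulSMul.algebraMap_injective S K
  rw [aeval_dehomogenize_div_eq_zero_iff hg hj (w := fun l => algebraMap S K (v l)) hG
    ((map_ne_zero_iff _ hι).2 hvj), ← map_eq_zero_iff (IsScalarTower.toAlgHom F S K) hι,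
    MvPolynomial.comp_aeval_apply]
  rfl

lemma algebraMap_reflect {u : ℕ} {p : F[X]} (hp : p.natDegree ≤ u) :
    algebraMap F[X] (RatFunc F) (p.reflect u) =
      RatFunc.X ^ u * aeval (RatFunc.X⁻¹ : RatFunc F) p := by
  let _ : Invertible (RatFunc.X⁻¹ : RatFunc F) :=
    invertibleOfNonzero (inv_ne_zero RatFunc.X_ne_zero)
  have h := eval₂_reflect_mul_pow (algebraMap F (RatFunc F)) (RatFunc.X⁻¹ : RatFunc F) u p hp
  rw [invOf_eq_inv, inv_inv] at h
  rw [aeval_def, ← h, mul_comm, mul_assoc, ← mul_pow, inv_mul_cancel₀ RatFunc.X_ne_zero, one_pow,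
    mul_one, ← aeval_def, RatFunc.aeval_X_left_eq_algebraMap]

lemma aeval_reflect_eq_zero_iff (hG : G.IsHomogeneous n) {u : ℕ} {P : σ → F[X]}
    (hP : ∀ l, (P l).natDegree ≤ u) :
    MvPolynomial.aeval (fun l => (P l).reflect u) G = 0 ↔ MvPolynomial.aeval P G = 0 := by
  have hinv : Transcendental F (RatFunc.X⁻¹ : RatFunc F) :=
    fun h => RatFunc.transcendental_X (IsAlgebraic.inv_iff.1 h)
  have hι : Function.Injective (IsScalarTower.toAlgHom F F[X] (RatFunc F)) :=
    RatFunc.algebraMap_injective F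
  rw [← map_eq_zero_iff _ hι, MvPolynomial.comp_aeval_apply]
  simp only [IsScalarTower.coe_toAlgHom', algebraMap_reflect (hP _)]
  exact aeval_mul_algHom_eq_zero_iff hG (pow_ne_zero u RatFunc.X_ne_zero)
    (transcendental_iff_injective.1 hinv) P

end HomogeneousRelations

lemma support_eq_of_associated {F σ : Type*} [Field F] {p q : MvPolynomial σ F}
    (h : Associated p q) : p.support = q.support := by
  obtain ⟨w, rfl⟩ := h
  obtain ⟨r, hr, hrw⟩ := MvPolynomial.isUnit_iff_eq_C_of_isReduced.1 w.isUnit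
  ext D
  rw [hrw, mul_comm, MvPolynomial.mem_support_iff, MvPolynomial.mem_support_iff,
    MvPolynomial.coeff_C_mul, mul_ne_zero_iff_left hr.ne_zero]

/-- The polynomial `𝓡` generates the homogeneous ideal of relations between the `v l`, that is,
it is the implicit equation of the projective hypersurface parameterized by `v`. -/
structure GeneratesHomogeneousRelations {F σ S : Type*} [Field F] [CommRing S] [Algebra F S]
    (v : σ → S) (𝓡 : MvPolynomial σ F) : Prop where
  isHomogeneous : ∃ n, 𝓡.IsHomogeneous n
  aeval_eq_zero : MvPolynomial.aeval v 𝓡 = 0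
  dvd_of_aeval_eq_zero {n : ℕ} {G : MvPolynomial σ F} :
    G.IsHomogeneous n → MvPolynomial.aeval v G = 0 → 𝓡 ∣ G

namespace GeneratesHomogeneousRelations

variable {F σ : Type*} [Field F]

lemma associated {S : Type*} [CommRing S] [Algebra F S] {v : σ → S} {𝓡 𝓡' : MvPolynomial σ F}
    (h : GeneratesHomogeneousRelations v 𝓡) (h' : GeneratesHomogeneousRelations v 𝓡') :
    Associated 𝓡 𝓡' := by
  obtain ⟨n, hn⟩ := h.isHomogeneous
  obtain ⟨n', hn'⟩ := h'.isHomogeneous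
  exact associated_of_dvd_dvd (h.dvd_of_aeval_eq_zero hn' h'.aeval_eq_zero)
    (h'.dvd_of_aeval_eq_zero hn h.aeval_eq_zero)

lemma reflect {P : σ → F[X]} {𝓡 : MvPolynomial σ F} (h : GeneratesHomogeneousRelations P 𝓡)
    {u : ℕ} (hP : ∀ l, (P l).natDegree ≤ u) :
    GeneratesHomogeneousRelations (fun l => (P l).reflect u) 𝓡 where
  isHomogeneous := h.isHomogeneous
  aeval_eq_zero :=
    (aeval_reflect_eq_zero_iff h.isHomogeneous.choose_spec hP).2 h.aeval_eq_zero
  dvd_of_aeval_eq_zero hG hG₀ := h.dvd_of_aeval_eq_zero hG ((aeval_reflect_eq_zero_iff hG hP).1 hG₀)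

theorem associated_dehomogenize {S K τ : Type*} [CommRing S] [Algebra F S] [Field K] [Algebra F K]
    [Algebra S K] [IsScalarTower F S K] [FaithfulSMul S K] {v : σ → S} {𝓡 : MvPolynomial σ F}
    (h : GeneratesHomogeneousRelations v 𝓡) {g : τ → σ} (hg : Function.Injective g) {j : σ}
    (hj : Set.range g = {j}ᶜ) (hvj : v j ≠ 0) {φ : MvPolynomial τ F} (hφ : Irreducible φ)
    (hφ₀ : MvPolynomial.aeval (fun t => algebraMap S K (v (g t)) / algebraMap S K (v j)) φ = 0) :
    Associated φ (dehomogenize hg 𝓡) := by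
  obtain ⟨Φ, hΦ, rfl⟩ := exists_isHomogeneous_dehomogenize_eq hg hj φ
  obtain ⟨n, hn⟩ := h.isHomogeneous
  have hdvd : dehomogenize hg 𝓡 ∣ dehomogenize hg Φ := _root_.map_dvd _ <|
    h.dvd_of_aeval_eq_zero hΦ
      ((aeval_dehomogenize_div_algebraMap_eq_zero_iff hg hj hvj hΦ).1 hφ₀)
  refine (hφ.dvd_iff.1 hdvd).resolve_left fun hunit => ?_
  have h₀ := (aeval_dehomogenize_div_algebraMap_eq_zero_iff (K := K) hg hj hvj hn).2 h.aeval_eq_zero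
  exact (hunit.map (MvPolynomial.aeval _)).ne_zero h₀

end GeneratesHomogeneousRelations

section Bivariate

variable {R : Type*} [CommRing R]

lemma coeff_equivMvPolynomial (p : R[X][X]) (d : Fin 2 →₀ ℕ) :
    (Polynomial.Bivariate.equivMvPolynomial R p).coeff d = (p.coeff (d 1)).coeff (d 0) := by
  induction p using Polynomial.induction_on' with
  | add p q hp hq => rw [map_add, MvPolynomial.coeff_add, hp, hq, coeff_add, coeff_add]
  | monomial n p =>
    induction p using Polynomial.induction_on' with
    | add p q hp hq =>
      rw [map_add, map_add, MvPolynomial.coeff_add, hp, hq, coeff_add, coeff_add]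
    | monomial m r =>
      have hmonomial : Polynomial.Bivariate.equivMvPolynomial R (monomial n (monomial m r)) =
          MvPolynomial.monomial (Finsupp.single 0 m + Finsupp.single 1 n) r := by
        simp [← C_mul_X_pow_eq_monomial, MvPolynomial.monomial_eq, mul_assoc]
      rw [hmonomial, MvPolynomial.coeff_monomial, coeff_monomial, apply_ite (coeff · (d 0)),
        coeff_zero, coeff_monomial, ← ite_and]
      refine if_congr ?_ rfl rfl
      simp [DFunLike.ext_iff, Fin.forall_fin_two, and_comm]

lemma aeval_equivMvPolynomial {S : Type*} [CommRing S] [Algebra R S] (v : Fin 2 → S) (p : R[X][X]) :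
    MvPolynomial.aeval v (Polynomial.Bivariate.equivMvPolynomial R p) =
      aevalAeval (v 0) (v 1) p := by
  suffices h : (MvPolynomial.aeval v).comp
      (Polynomial.Bivariate.equivMvPolynomial R : R[X][X] →ₐ[R] MvPolynomial (Fin 2) R) =
      aevalAeval (v 0) (v 1) from congr($h p)
  ext <;> simp

end Bivariate

section Chart

variable {i j k : Fin 3}

lemma injective_chart (hik : i ≠ k) : Function.Injective ![i, k] := by
  simpa [Function.Injective, Fin.forall_fin_two, eq_comm] using hik

lemma range_chart (hij : i ≠ j) (hik : i ≠ k) (hjk : j ≠ k) : Set.range ![i, k] = {j}ᶜ := by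
  rw [Matrix.range_cons, Matrix.range_cons, Matrix.range_empty, Set.union_empty]
  ext l
  simp only [Set.mem_union, Set.mem_singleton_iff, Set.mem_compl_iff]
  lia

lemma degree_eq_add_add (hij : i ≠ j) (hik : i ≠ k) (hjk : j ≠ k) (D : Fin 3 →₀ ℕ) :
    D.degree = D i + D k + D j := by
  rw [degree_eq_degree_comapDomain_add (injective_chart hik) (range_chart hij hik hjk),
    Finsupp.degree_eq_sum, Fin.sum_univ_two]
  rfl

end Chart

open Polynomial.Bivariate in
theorem exists_generatesHomogeneousRelations {F : Type*} [Field F] [IsAlgClosed F] [CharZero F]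
    {P : Fin 3 → F[X]} {i j k : Fin 3} (hij : i ≠ j) (hik : i ≠ k) (hjk : j ≠ k) {u : ℕ}
    (h : NondegenerateTriple (P i) (P j) (P k) u) :
    ∃ 𝓡, GeneratesHomogeneousRelations P 𝓡 ∧ dehomogenize (injective_chart hik) 𝓡 =
      equivMvPolynomial F (implicitResultant (P i) (P j) (P k) u) := by
  obtain ⟨𝓡, hhom, h𝓡⟩ := exists_isHomogeneous_dehomogenize_eq (injective_chart hik)
    (range_chart hij hik hjk) (equivMvPolynomial F (implicitResultant (P i) (P j) (P k) u))
  have hne : equivMvPolynomial F (implicitResultant (P i) (P j) (P k) u) ≠ 0 :=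
    (map_ne_zero_iff _ (AlgEquiv.injective _)).2 h.implicitResultant_ne_zero
  have hvanish {n : ℕ} {G : MvPolynomial (Fin 3) F} (hG : G.IsHomogeneous n) :
      MvPolynomial.aeval P G = 0 ↔
        aevalAeval (algebraMap F[X] (RatFunc F) (P i) / algebraMap F[X] (RatFunc F) (P j))
          (algebraMap F[X] (RatFunc F) (P k) / algebraMap F[X] (RatFunc F) (P j))
          ((equivMvPolynomial F).symm (dehomogenize (injective_chart hik) G)) = 0 := by
    rw [← aeval_dehomogenize_div_algebraMap_eq_zero_iff (K := RatFunc F) (injective_chart hik)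
      (range_chart hij hik hjk) h.mid_ne_zero hG]
    obtain ⟨p, hp⟩ := (equivMvPolynomial F).surjective (dehomogenize (injective_chart hik) G)
    rw [← hp, aeval_equivMvPolynomial, AlgEquiv.symm_apply_apply]
    rfl
  refine ⟨𝓡, ⟨⟨_, hhom⟩, ?_, fun {n G} hG hG₀ => ?_⟩, h𝓡⟩
  · rw [hvanish hhom, h𝓡, AlgEquiv.symm_apply_apply]
    exact h.aevalAeval_implicitResultant
  · refine dvd_of_dehomogenize_dvd (injective_chart hik) (range_chart hij hik hjk) hhom hG
      (not_X_dvd_of_isHomogeneous_totalDegree _ (range_chart hij hik hjk) hne hhom h𝓡) ?_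
    have hdvd := _root_.map_dvd (equivMvPolynomial F) (h.implicitResultant_dvd ((hvanish hG).1 hG₀))
    rwa [AlgEquiv.apply_symm_apply, ← h𝓡] at hdvd

/-- In the `(e_i, e_k)`-plane, the exponents in `s` lie to the right of the broken line through
`(c, 0)`, `(0, a)` and `(0, u)`, whose vertices are attained, and `(0, u)` is the only one of them
at height `u` or above. -/
structure HasLeftBoundary {σ : Type*} (s : Finset (σ →₀ ℕ)) (i k : σ) (a c u : ℕ) : Prop where
  exists_bottom : ∃ D ∈ s, D i = c ∧ D k = 0
  exists_corner : ∃ D ∈ s, D i = 0 ∧ D k = a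
  exists_top : ∃ D ∈ s, D i = 0 ∧ D k = u
  le_weight : ∀ D ∈ s, a * c ≤ a * D i + c * D k
  apply_le : ∀ D ∈ s, D k ≤ u
  apply_eq_zero : ∀ D ∈ s, D k = u → D i = 0

section Support

open Polynomial.Bivariate

variable {F : Type*} [Field F] [IsAlgClosed F] [CharZero F] {P : Fin 3 → F[X]} {i j k : Fin 3}
  (hij : i ≠ j) (hik : i ≠ k) (hjk : j ≠ k) {u : ℕ} {𝓡 : MvPolynomial (Fin 3) F}
  (h : NondegenerateTriple (P i) (P j) (P k) u) (h𝓡 : GeneratesHomogeneousRelations P 𝓡)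

include hij hjk h h𝓡

lemma image_support_eq_support_implicitResultant :
    𝓡.support.image (fun D => D.comapDomain ![i, k] (injective_chart hik).injOn) =
      (equivMvPolynomial F (implicitResultant (P i) (P j) (P k) u)).support := by
  obtain ⟨𝓡', h𝓡', heq⟩ := exists_generatesHomogeneousRelations hij hik hjk h
  obtain ⟨n, hn⟩ := h𝓡'.isHomogeneous
  rw [support_eq_of_associated (h𝓡.associated h𝓡'), ← heq,
    support_dehomogenize (injective_chart hik) (range_chart hij hik hjk) hn]

include hik

lemma exists_mem_support_of_coeff_ne_zero {m n : ℕ}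
    (hmn : ((implicitResultant (P i) (P j) (P k) u).coeff n).coeff m ≠ 0) :
    ∃ D ∈ 𝓡.support, D i = m ∧ D k = n := by
  have hmem : Finsupp.single 0 m + Finsupp.single 1 n ∈
      (equivMvPolynomial F (implicitResultant (P i) (P j) (P k) u)).support := by
    rw [MvPolynomial.mem_support_iff, coeff_equivMvPolynomial]
    simpa using hmn
  rw [← image_support_eq_support_implicitResultant hij hik hjk h h𝓡, Finset.mem_image] at hmem
  obtain ⟨D, hD, heq⟩ := hmem
  exact ⟨D, hD, by simpa using congr($heq 0), by simpa using congr($heq 1)⟩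

lemma coeff_ne_zero_of_mem_support {D : Fin 3 →₀ ℕ} (hD : D ∈ 𝓡.support) :
    ((implicitResultant (P i) (P j) (P k) u).coeff (D k)).coeff (D i) ≠ 0 := by
  have hmem := Finset.mem_image_of_mem
    (fun D : Fin 3 →₀ ℕ => D.comapDomain ![i, k] (injective_chart hik).injOn) hD
  rwa [image_support_eq_support_implicitResultant hij hik hjk h h𝓡, MvPolynomial.mem_support_iff,
    coeff_equivMvPolynomial] at hmem

theorem hasLeftBoundary_support :
    HasLeftBoundary 𝓡.support i k (P i).natTrailingDegree (P k).natTrailingDegree u := by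
  obtain ⟨κ, hκ, hlead⟩ := h.exists_coeff_implicitResultant_eq_C
  have hmem {D : Fin 3 →₀ ℕ} (hD : D ∈ 𝓡.support) :=
    coeff_ne_zero_of_mem_support hij hik hjk h h𝓡 hD
  refine ⟨?_, ?_, ?_, fun D hD => ?_, fun D hD => ?_, fun D hD hDk => ?_⟩
  · exact exists_mem_support_of_coeff_ne_zero hij hik hjk h h𝓡
      h.coeff_implicitResultant_right_ne_zero
  · exact exists_mem_support_of_coeff_ne_zero hij hik hjk h h𝓡
      h.coeff_implicitResultant_left_ne_zero
  · exact exists_mem_support_of_coeff_ne_zero hij hik hjk h h𝓡 (by rwa [hlead, coeff_C_zero])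
  · exact_mod_cast h.weightGE_implicitResultant (D k) (D i) (hmem hD)
  · by_contra! hlt
    refine hmem hD ?_
    rw [coeff_eq_zero_of_natDegree_lt ((natDegree_implicitResultant_le _ _ _ _).trans_lt hlt),
      coeff_zero]
  · by_contra hDi
    have := hmem hD
    rw [hDk, hlead, coeff_C_of_ne_zero hDi] at this
    exact this rfl

theorem hasLeftBoundary_support_reflect :
    HasLeftBoundary 𝓡.support j k (u - (P j).natDegree) (u - (P k).natDegree) u := by
  have hdeg (l : Fin 3) : (P l).natDegree ≤ u := by
    obtain rfl | rfl | rfl : l = i ∨ l = j ∨ l = k := by lia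
    exacts [h.natDegree_left.le, h.natDegree_mid_lt.le, h.natDegree_right_lt.le]
  have hreflect := hasLeftBoundary_support hij.symm hjk hik h.reflect (h𝓡.reflect hdeg)
  rwa [natTrailingDegree_reflect h.mid_ne_zero (hdeg j),
    natTrailingDegree_reflect h.right_ne_zero (hdeg k)] at hreflect

lemma add_add_eq_of_mem_support {D : Fin 3 →₀ ℕ} (hD : D ∈ 𝓡.support) :
    D i + D j + D k = u := by
  obtain ⟨n, hn⟩ := h𝓡.isHomogeneous
  have hsum {E : Fin 3 →₀ ℕ} (hE : E ∈ 𝓡.support) : E i + E j + E k = n := by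
    have hdeg : n = E.degree := hn.degree_eq_sum_deg_support hE
    rw [hdeg, degree_eq_add_add hij hik hjk]
    ring
  obtain ⟨E, hE, hEi, hEk⟩ := (hasLeftBoundary_support hij hik hjk h h𝓡).exists_top
  have hEj := (hasLeftBoundary_support_reflect hij hik hjk h h𝓡).apply_eq_zero E hE hEk
  have := hsum hE
  have := hsum hD
  lia

end Support

section Geometry

lemma exists_mem_of_triangle {T : Set (ℝ × ℝ)} (hT : Convex ℝ T) {a c u x h : ℝ} (ha : 0 < a)
    (hbottom : (c, 0) ∈ T) (hcorner : (0, a) ∈ T) (htop : (0, u) ∈ T)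
    (hx : 0 ≤ x) (hh : 0 ≤ h) (hhu : h ≤ u) (hw : a * c ≤ a * x + c * h) :
    ∃ x₀ ≤ x, (x₀, h) ∈ T := by
  rcases le_or_gt h a with hha | hah
  · refine ⟨c * (a - h) / a, by rw [div_le_iff₀ ha]; linarith, ?_⟩
    have hpoint : (c * (a - h) / a, h) = ((a - h) / a) • (c, (0 : ℝ)) + (h / a) • (0, a) := by
      simp only [Prod.smul_mk, Prod.mk_add_mk, smul_eq_mul, Prod.mk.injEq]
      constructor <;> field_simp <;> ring
    rw [hpoint]
    exact hT hbottom hcorner (div_nonneg (sub_nonneg.2 hha) ha.le) (div_nonneg hh ha.le)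
      (by field_simp; ring)
  · have hau : 0 < u - a := by linarith
    refine ⟨0, hx, ?_⟩
    have hpoint : ((0 : ℝ), h) =
        ((u - h) / (u - a)) • (0, a) + ((h - a) / (u - a)) • (0, u) := by
      simp only [Prod.smul_mk, Prod.mk_add_mk, smul_eq_mul, Prod.mk.injEq]
      constructor <;> field_simp <;> ring
    rw [hpoint]
    exact hT hcorner htop (div_nonneg (by linarith) hau.le) (div_nonneg (by linarith) hau.le)
      (by field_simp; ring)

/-- The affine extension of implicit points to real triples with sum `u`, in
`(e_i, e_k)`-coordinates: the pair `p` is sent to `(e₀, e₁)`. -/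
noncomputable def implicitMap (i k : Fin 3) (u : ℝ) : ℝ × ℝ →ᵃ[ℝ] ℝ × ℝ :=
  let coordinate (l : Fin 3) : ℝ × ℝ →ᵃ[ℝ] ℝ :=
    if l = i then AffineMap.fst else if l = k then AffineMap.snd
    else AffineMap.const ℝ (ℝ × ℝ) u - AffineMap.fst - AffineMap.snd
  (coordinate 0).prod (coordinate 1)

variable {i j k : Fin 3} (hij : i ≠ j) (hik : i ≠ k) (hjk : j ≠ k)

include hij hik hjk

lemma implicitMap_apply {u : ℝ} {v : Fin 3 → ℝ} (hv : v i + v j + v k = u) :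
    implicitMap i k u (v i, v k) = (v 0, v 1) := by
  have hcoord (l : Fin 3) : (if l = i then AffineMap.fst else if l = k then AffineMap.snd
      else AffineMap.const ℝ (ℝ × ℝ) u - AffineMap.fst - AffineMap.snd : ℝ × ℝ →ᵃ[ℝ] ℝ)
      (v i, v k) = v l := by
    obtain rfl | rfl | rfl : l = i ∨ l = j ∨ l = k := by lia
    · simp
    · simp [hij.symm, hjk, ← hv, add_sub_right_comm]
    · simp [hik.symm]
  exact Prod.ext (hcoord 0) (hcoord 1)

lemma implicitMap_natCast {u : ℕ} {D : Fin 3 →₀ ℕ} (hD : D i + D j + D k = u) :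
    implicitMap i k u (D i, D k) = ((D 0 : ℝ), (D 1 : ℝ)) :=
  implicitMap_apply (v := fun l => (D l : ℝ)) hij hik hjk (by exact_mod_cast hD)

lemma implicitMap_swap (u y h : ℝ) :
    implicitMap j k u (y, h) = implicitMap i k u (u - y - h, h) := by
  let v : Fin 3 → ℝ := fun l => if l = i then u - y - h else if l = j then y else h
  have hvi : v i = u - y - h := if_pos rfl
  have hvj : v j = y := by simp [v, hij.symm]
  have hvk : v k = h := by simp [v, hik.symm, hjk.symm]
  rw [← hvi, ← hvj, ← hvk, implicitMap_apply hij hik hjk (by rw [hvi, hvj, hvk]; ring),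
    implicitMap_apply hij.symm hjk hik (by rw [hvi, hvj, hvk]; ring)]

lemma implicitPoint_eq {u : ℕ} {D : Fin 3 →₀ ℕ} (hD : D i + D j + D k = u) :
    implicitPoint i j u (D i) (D j) = ((D 0 : ℝ), (D 1 : ℝ)) := by
  have hcoord (l : Fin 3) : (if l = i then D i else if l = j then D j else u - D i - D j) =
      D l := by
    obtain rfl | rfl | rfl : l = i ∨ l = j ∨ l = k := by lia
    · simp
    · simp [hij.symm]
    · simp [hik.symm, hjk.symm, ← hD, Nat.sub_sub]
  rw [implicitPoint, hcoord, hcoord]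

omit hij hjk hik in
lemma HasLeftBoundary.exists_implicitMap_mem {s : Finset (Fin 3 →₀ ℕ)} {a c u : ℕ}
    (hs : HasLeftBoundary s i k a c u) (ha : 0 < a) {T : Set (ℝ × ℝ)} (hT : Convex ℝ T)
    (hbottom : implicitMap i k u (c, 0) ∈ T) (hcorner : implicitMap i k u (0, a) ∈ T)
    (htop : implicitMap i k u (0, u) ∈ T) {D : Fin 3 →₀ ℕ} (hD : D ∈ s) :
    ∃ x ≤ (D i : ℝ), implicitMap i k u (x, D k) ∈ T :=
  exists_mem_of_triangle (hT.affine_preimage (implicitMap i k u)) (by exact_mod_cast ha) hbottom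
    hcorner htop (by positivity) (by positivity) (by exact_mod_cast hs.apply_le D hD)
    (by exact_mod_cast hs.le_weight D hD)

variable {s : Finset (Fin 3 →₀ ℕ)} {a a' c c' u : ℕ} (hs : HasLeftBoundary s i k a c u)
  (hs' : HasLeftBoundary s j k a' c' u) (ha : 0 < a) (ha' : 0 < a')
  (hsum : ∀ D ∈ s, D i + D j + D k = u)

include hs hs' ha ha' hsum

lemma mem_of_hasLeftBoundary {T : Set (ℝ × ℝ)} (hT : Convex ℝ T)
    (hbottom : implicitMap i k u (c, 0) ∈ T) (hcorner : implicitMap i k u (0, a) ∈ T)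
    (htop : implicitMap i k u (0, u) ∈ T) (hbottom' : implicitMap j k u (c', 0) ∈ T)
    (hcorner' : implicitMap j k u (0, a') ∈ T) {D : Fin 3 →₀ ℕ} (hD : D ∈ s) :
    ((D 0 : ℝ), (D 1 : ℝ)) ∈ T := by
  have htop' : implicitMap j k u (0, u) ∈ T := by
    rwa [implicitMap_swap hij hik hjk, sub_zero, sub_self]
  obtain ⟨x, hx, hxT⟩ := hs.exists_implicitMap_mem ha hT hbottom hcorner htop hD
  obtain ⟨y, hy, hyT⟩ := hs'.exists_implicitMap_mem ha' hT hbottom' hcorner' htop' hD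
  rw [implicitMap_swap hij hik hjk] at hyT
  have hslice : Convex ℝ ((fun t : ℝ => implicitMap i k u (t, D k)) ⁻¹' T) :=
    hT.affine_preimage ((implicitMap i k u).comp
      ((AffineMap.id ℝ ℝ).prod (AffineMap.const ℝ ℝ (D k : ℝ))))
  have hDu : (D i : ℝ) + D j + D k = u := by exact_mod_cast hsum D hD
  rw [← implicitMap_natCast hij hik hjk (hsum D hD)]
  exact hslice.ordConnected.out hxT hyT ⟨hx, by linarith⟩

theorem convexHull_image_eq :
    convexHull ℝ ((fun D : Fin 3 →₀ ℕ => ((D 0 : ℝ), (D 1 : ℝ))) '' s) = convexHull ℝ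
      {implicitPoint i j u (u - a') 0, implicitPoint i j u (u - c') c',
        implicitPoint i j u c (u - c), implicitPoint i j u 0 (u - a), implicitPoint i j u 0 0} := by
  have hpoint {D : Fin 3 →₀ ℕ} (hD : D ∈ s) {x y : ℕ} (hx : D i = x) (hy : D j = y) :
      implicitPoint i j u x y = ((D 0 : ℝ), (D 1 : ℝ)) := by
    rw [← hx, ← hy, implicitPoint_eq hij hik hjk (hsum D hD)]
  obtain ⟨B, hB, hBi, hBk⟩ := hs.exists_bottom
  obtain ⟨C, hC, hCi, hCk⟩ := hs.exists_corner
  obtain ⟨E, hE, hEi, hEk⟩ := hs.exists_top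
  obtain ⟨B', hB', hBj', hBk'⟩ := hs'.exists_bottom
  obtain ⟨C', hC', hCj', hCk'⟩ := hs'.exists_corner
  have hsumB := hsum B hB
  have hsumC := hsum C hC
  have hsumE := hsum E hE
  have hsumB' : B' j + B' i + B' k = u := add_comm (B' i) (B' j) ▸ hsum B' hB'
  have hsumC' : C' j + C' i + C' k = u := add_comm (C' i) (C' j) ▸ hsum C' hC'
  rw [hpoint hC' (by lia) hCj', hpoint hB' (by lia) hBj', hpoint hB hBi (by lia),
    hpoint hC hCi (by lia), hpoint hE hEi (by lia)]
  refine le_antisymm (convexHull_min ?_ (convex_convexHull ℝ _)) (convexHull_mono ?_)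
  · rintro _ ⟨D, hD, rfl⟩
    refine mem_of_hasLeftBoundary hij hik hjk hs hs' ha ha' hsum (convex_convexHull ℝ _)
      ?_ ?_ ?_ ?_ ?_ hD <;> apply subset_convexHull
    · simp [← implicitMap_natCast hij hik hjk hsumB, hBi, hBk]
    · simp [← implicitMap_natCast hij hik hjk hsumC, hCi, hCk]
    · simp [← implicitMap_natCast hij hik hjk hsumE, hEi, hEk]
    · simp [← implicitMap_natCast hij.symm hjk hik hsumB', hBj', hBk']
    · simp [← implicitMap_natCast hij.symm hjk hik hsumC', hCj', hCk']
  · simp only [Set.insert_subset_iff, Set.singleton_subset_iff]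
    exact ⟨⟨C', hC', rfl⟩, ⟨B', hB', rfl⟩, ⟨B, hB, rfl⟩, ⟨C, hC, rfl⟩, ⟨E, hE, rfl⟩⟩

end Geometry

section NewtonPolygon

lemma GeneratesHomogeneousRelations.newtonPolygon_eq {P : Fin 3 → ℂ[X]} {𝓡 : MvPolynomial (Fin 3) ℂ}
    (h𝓡 : GeneratesHomogeneousRelations P 𝓡) (hP : P 2 ≠ 0) {φ : MvPolynomial (Fin 2) ℂ}
    (hφ : Irreducible φ)
    (hφ₀ : MvPolynomial.aeval
      ![algebraMap ℂ[X] (RatFunc ℂ) (P 0) / algebraMap ℂ[X] (RatFunc ℂ) (P 2),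
        algebraMap ℂ[X] (RatFunc ℂ) (P 1) / algebraMap ℂ[X] (RatFunc ℂ) (P 2)] φ = 0) :
    newtonPolygon φ =
      convexHull ℝ ((fun D : Fin 3 →₀ ℕ => ((D 0 : ℝ), (D 1 : ℝ))) '' 𝓡.support) := by
  have hg : Function.Injective ![(0 : Fin 3), 1] := injective_chart (by decide)
  have hrange : Set.range ![(0 : Fin 3), 1] = {2}ᶜ :=
    range_chart (by decide) (by decide) (by decide)
  have hcoord : ![algebraMap ℂ[X] (RatFunc ℂ) (P 0) / algebraMap ℂ[X] (RatFunc ℂ) (P 2),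
      algebraMap ℂ[X] (RatFunc ℂ) (P 1) / algebraMap ℂ[X] (RatFunc ℂ) (P 2)] =
      fun t => algebraMap ℂ[X] (RatFunc ℂ) (P (![0, 1] t)) / algebraMap ℂ[X] (RatFunc ℂ) (P 2) := by
    ext t
    fin_cases t <;> rfl
  rw [hcoord] at hφ₀
  obtain ⟨n, hn⟩ := h𝓡.isHomogeneous
  rw [newtonPolygon, support_eq_of_associated (h𝓡.associated_dehomogenize hg hrange hP hφ hφ₀),
    support_dehomogenize hg hrange hn, Finset.coe_image, Set.image_image]
  rfl

theorem NondegenerateTriple.newtonPolygon_eq {P : Fin 3 → ℂ[X]} {i j k : Fin 3} (hij : i ≠ j)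
    (hik : i ≠ k) (hjk : j ≠ k) {u : ℕ} (h : NondegenerateTriple (P i) (P j) (P k) u)
    {φ : MvPolynomial (Fin 2) ℂ} (hφ : Irreducible φ)
    (hφ₀ : MvPolynomial.aeval
      ![algebraMap ℂ[X] (RatFunc ℂ) (P 0) / algebraMap ℂ[X] (RatFunc ℂ) (P 2),
        algebraMap ℂ[X] (RatFunc ℂ) (P 1) / algebraMap ℂ[X] (RatFunc ℂ) (P 2)] φ = 0) :
    newtonPolygon φ = convexHull ℝ
      {implicitPoint i j u (P j).natDegree 0,
        implicitPoint i j u (P k).natDegree (u - (P k).natDegree),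
        implicitPoint i j u (P k).natTrailingDegree (u - (P k).natTrailingDegree),
        implicitPoint i j u 0 (u - (P i).natTrailingDegree), implicitPoint i j u 0 0} := by
  obtain ⟨𝓡, h𝓡, -⟩ := exists_generatesHomogeneousRelations hij hik hjk h
  have hP : P 2 ≠ 0 := by
    obtain hl | hl | hl : 2 = i ∨ 2 = j ∨ 2 = k := by lia
    exacts [hl ▸ h.left_ne_zero, hl ▸ h.mid_ne_zero, hl ▸ h.right_ne_zero]
  have hpos : 0 < (P i).natTrailingDegree := by
    rw [Nat.pos_iff_ne_zero, Ne, natTrailingDegree_eq_zero]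
    exact not_or_intro h.left_ne_zero (not_not.2 h.coeff_zero_left)
  rw [h𝓡.newtonPolygon_eq hP hφ hφ₀, convexHull_image_eq hij hik hjk
    (hasLeftBoundary_support hij hik hjk h h𝓡) (hasLeftBoundary_support_reflect hij hik hjk h h𝓡)
    hpos (Nat.sub_pos_of_lt h.natDegree_mid_lt)
    (fun D hD => add_add_eq_of_mem_support hij hik hjk h h𝓡 hD),
    Nat.sub_sub_self h.natDegree_mid_lt.le, Nat.sub_sub_self h.natDegree_right_lt.le]

end NewtonPolygon

section Generic

/-- The property `p` holds for generic coefficient vectors: on the complement of some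
hypersurface. -/
def HoldsGenerically {σ R : Type*} [CommRing R] (p : (σ → R) → Prop) : Prop :=
  ∃ G : MvPolynomial σ R, G ≠ 0 ∧ ∀ c, MvPolynomial.eval c G ≠ 0 → p c

namespace HoldsGenerically

variable {σ R : Type*} [CommRing R] {p q : (σ → R) → Prop}

lemma mono (hp : HoldsGenerically p) (h : ∀ c, p c → q c) : HoldsGenerically q :=
  let ⟨G, hG, hGp⟩ := hp
  ⟨G, hG, fun c hc => h c (hGp c hc)⟩

lemma and [IsDomain R] (hp : HoldsGenerically p) (hq : HoldsGenerically q) :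
    HoldsGenerically fun c => p c ∧ q c := by
  obtain ⟨G, hG, hGp⟩ := hp
  obtain ⟨H, hH, hHq⟩ := hq
  refine ⟨G * H, mul_ne_zero hG hH, fun c hc => ?_⟩
  rw [map_mul] at hc
  exact ⟨hGp c (left_ne_zero_of_mul hc), hHq c (right_ne_zero_of_mul hc)⟩

lemma forall_ne_zero [IsDomain R] [Finite σ] :
    HoldsGenerically fun c : σ → R => ∀ x, c x ≠ 0 := by
  have := Fintype.ofFinite σ
  refine ⟨∏ x, MvPolynomial.X x,
    Finset.prod_ne_zero_iff.2 fun x _ => MvPolynomial.X_ne_zero x, fun c hc x => ?_⟩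
  rw [map_prod] at hc
  simpa using Finset.prod_ne_zero_iff.1 hc x (Finset.mem_univ x)

end HoldsGenerically

section ShiftedPoly

variable {R : Type*} [CommRing R] {S : Finset ℕ}

/-- The polynomial `∑ c_s t ^ s` divided by `t ^ m`, for `m` at most the minimum of `S`. -/
noncomputable def shiftedPoly (S : Finset ℕ) (m : ℕ) (c : {s // s ∈ S} → R) : R[X] :=
  ∑ s ∈ S.attach, C (c s) * X ^ ((s : ℕ) - m)

lemma map_shiftedPoly {R' : Type*} [CommRing R'] (f : R →+* R') (m : ℕ) (c : {s // s ∈ S} → R) :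
    (shiftedPoly S m c).map f = shiftedPoly S m fun s => f (c s) := by
  simp [shiftedPoly, Polynomial.map_sum]

lemma natDegree_shiftedPoly_le (hS : S.Nonempty) (m : ℕ) (c : {s // s ∈ S} → R) :
    (shiftedPoly S m c).natDegree ≤ S.max' hS - m :=
  natDegree_sum_le_of_forall_le _ _ fun s _ =>
    (natDegree_C_mul_X_pow_le _ _).trans (Nat.sub_le_sub_right (S.le_max' s s.2) m)

lemma shiftedPoly_single (s : {s // s ∈ S}) (m : ℕ) :
    shiftedPoly S m (Pi.single s (1 : R)) = X ^ ((s : ℕ) - m) := by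
  rw [shiftedPoly, Finset.sum_eq_single_of_mem s (Finset.mem_attach _ _)]
  · simp
  · intro t _ hts
    simp [Pi.single_eq_of_ne hts]

lemma polyOfCoeffs_eq_X_pow_mul (hS : S.Nonempty) (c : {s // s ∈ S} → ℂ) :
    polyOfCoeffs S c = X ^ S.min' hS * shiftedPoly S (S.min' hS) c := by
  rw [polyOfCoeffs, shiftedPoly, Finset.mul_sum]
  refine Finset.sum_congr rfl fun s _ => ?_
  rw [mul_left_comm, ← pow_add, Nat.add_sub_cancel' (S.min'_le s s.2)]

end ShiftedPoly

section ShiftedResultant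

variable {R : Type*} [CommRing R] {S S' : Finset ℕ} (hS : S.Nonempty) (hS' : S'.Nonempty)

/-- The resultant, as a function of the coefficients, of the polynomials with supports `S` and `S'`
stripped of their powers of `t`. Regarding the first as having degree one too many multiplies the
resultant by a leading coefficient, and makes it detect common roots even for constants. -/
noncomputable def shiftedResultant (c : {s // s ∈ S} → R) (c' : {s // s ∈ S'} → R) : R :=
  resultant (shiftedPoly S (S.min' hS) c) (shiftedPoly S' (S'.min' hS') c')
    (S.max' hS - S.min' hS + 1) (S'.max' hS' - S'.min' hS')

lemma map_shiftedResultant {R' : Type*} [CommRing R'] (f : R →+* R') (c : {s // s ∈ S} → R)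
    (c' : {s // s ∈ S'} → R) :
    f (shiftedResultant hS hS' c c') =
      shiftedResultant hS hS' (fun s => f (c s)) fun s => f (c' s) := by
  rw [shiftedResultant, ← resultant_map_map, map_shiftedPoly, map_shiftedPoly, shiftedResultant]

lemma shiftedResultant_single_ne_zero [Nontrivial R] :
    shiftedResultant hS hS' (Pi.single ⟨_, S.min'_mem hS⟩ (1 : R))
      (Pi.single ⟨_, S'.max'_mem hS'⟩ 1) ≠ 0 := by
  rw [shiftedResultant, shiftedPoly_single, shiftedPoly_single, Nat.sub_self, pow_zero,
    resultant_one_left, coeff_X_pow_self, one_pow, mul_one]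
  exact ((isUnit_one.neg).pow _).ne_zero

lemma noCommonNonzeroRoot_of_shiftedResultant_ne_zero {c : {s // s ∈ S} → ℂ}
    {c' : {s // s ∈ S'} → ℂ} (h : shiftedResultant hS hS' c c' ≠ 0) :
    NoCommonNonzeroRoot (polyOfCoeffs S c) (polyOfCoeffs S' c') := by
  intro τ hτ hroot hroot'
  rw [polyOfCoeffs_eq_X_pow_mul hS, eval_mul, eval_pow, eval_X,
    mul_eq_zero_iff_left (pow_ne_zero _ hτ)] at hroot
  rw [polyOfCoeffs_eq_X_pow_mul hS', eval_mul, eval_pow, eval_X,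
    mul_eq_zero_iff_left (pow_ne_zero _ hτ)] at hroot'
  exact h <| resultant_eq_zero_of_eval_eq_zero
    ((natDegree_shiftedPoly_le hS _ c).trans (Nat.le_succ _)) (natDegree_shiftedPoly_le hS' _ c')
    (Nat.succ_ne_zero _) hroot hroot'

theorem holdsGenerically_noCommonNonzeroRoot {ι : Type*} {S : ι → Finset ℕ}
    {l l' : ι} (hS : (S l).Nonempty) (hS' : (S l').Nonempty) (hl : l ≠ l') :
    HoldsGenerically fun c : (Σ l, {s // s ∈ S l}) → ℂ =>
      NoCommonNonzeroRoot (polyOfCoeffs (S l) fun s => c ⟨l, s⟩)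
        (polyOfCoeffs (S l') fun s => c ⟨l', s⟩) := by
  classical
  let G : MvPolynomial (Σ l, {s // s ∈ S l}) ℂ := shiftedResultant hS hS'
    (fun s => MvPolynomial.X ⟨l, s⟩) fun s => MvPolynomial.X ⟨l', s⟩
  have eval_G (c : (Σ l, {s // s ∈ S l}) → ℂ) : MvPolynomial.eval c G =
      shiftedResultant hS hS' (fun s => c ⟨l, s⟩) fun s => c ⟨l', s⟩ := by
    simp only [G, map_shiftedResultant, MvPolynomial.eval_X]
  refine ⟨G, fun hG => ?_, fun c hc =>
    noCommonNonzeroRoot_of_shiftedResultant_ne_zero hS hS' (eval_G c ▸ hc)⟩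
  let c₀ (x : Σ l, {s // s ∈ S l}) : ℂ :=
    if x.1 = l then if (x.2 : ℕ) = (S l).min' hS then 1 else 0
    else if (x.2 : ℕ) = (S l').max' hS' then 1 else 0
  refine shiftedResultant_single_ne_zero (R := ℂ) hS hS' ?_
  rw [← map_zero (MvPolynomial.eval c₀), ← hG, eval_G]
  congr 1 <;> ext s <;> simp [c₀, hl.symm, Pi.single_apply, Subtype.ext_iff]

end ShiftedResultant

section PolyOfCoeffs

variable {S : Finset ℕ} {c : {s // s ∈ S} → ℂ}

lemma coeff_polyOfCoeffs_of_mem {n : ℕ} (hn : n ∈ S) : (polyOfCoeffs S c).coeff n = c ⟨n, hn⟩ := by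
  simp only [polyOfCoeffs, finsetSum_coeff, coeff_C_mul_X_pow]
  rw [Finset.sum_eq_single_of_mem ⟨n, hn⟩ (Finset.mem_attach _ _)
    fun s _ hs => if_neg fun h => hs (Subtype.ext h.symm), if_pos rfl]

lemma coeff_polyOfCoeffs_of_notMem {n : ℕ} (hn : n ∉ S) : (polyOfCoeffs S c).coeff n = 0 := by
  simp only [polyOfCoeffs, finsetSum_coeff, coeff_C_mul_X_pow]
  exact Finset.sum_eq_zero fun s _ => if_neg fun h => hn (by simp [h])

variable (hc : ∀ s, c s ≠ 0)

include hc

lemma support_polyOfCoeffs : (polyOfCoeffs S c).support = S := by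
  ext n
  rw [mem_support_iff]
  refine ⟨not_imp_comm.1 coeff_polyOfCoeffs_of_notMem, fun hn => ?_⟩
  rw [coeff_polyOfCoeffs_of_mem hn]
  exact hc _

lemma coeff_polyOfCoeffs_ne_zero_iff {n : ℕ} : (polyOfCoeffs S c).coeff n ≠ 0 ↔ n ∈ S := by
  rw [← mem_support_iff, support_polyOfCoeffs hc]

lemma natDegree_polyOfCoeffs (hS : S.Nonempty) : (polyOfCoeffs S c).natDegree = S.max' hS := by
  have h₀ : polyOfCoeffs S c ≠ 0 := by rwa [← support_nonempty, support_polyOfCoeffs hc]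
  simp only [natDegree_eq_support_max' h₀, support_polyOfCoeffs hc]

lemma natTrailingDegree_polyOfCoeffs (hS : S.Nonempty) :
    (polyOfCoeffs S c).natTrailingDegree = S.min' hS := by
  have h₀ : polyOfCoeffs S c ≠ 0 := by rwa [← support_nonempty, support_polyOfCoeffs hc]
  simp only [natTrailingDegree_eq_support_min' h₀, support_polyOfCoeffs hc]

end PolyOfCoeffs

lemma eq_one_of_dvd_of_gcd_eq_one {s : Finset ℕ} (hs : (s.filter fun n => n ≠ 0).gcd id = 1) {d : ℕ}
    (hd : ∀ n ∈ s, d ∣ n) : d = 1 :=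
  Nat.dvd_one.1 (hs ▸ Finset.dvd_gcd fun n hn => hd n (Finset.mem_of_mem_filter n hn))

theorem holdsGenerically_nondegenerateTriple {S : Fin 3 → Finset ℕ} (hne : ∀ i, (S i).Nonempty)
    (hgcd : ((S 0 ∪ S 1 ∪ S 2).filter (fun s => s ≠ 0)).gcd id = 1) {u : ℕ} {i j k : Fin 3}
    (hij : i ≠ j) (hik : i ≠ k) (hjk : j ≠ k)
    (hiL : 0 < (S i).min' (hne i)) (hiR : (S i).max' (hne i) = u)
    (hjL : (S j).min' (hne j) = 0) (hjR : (S j).max' (hne j) < u)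
    (hkL : 0 < (S k).min' (hne k)) (hkR : (S k).max' (hne k) < u) :
    HoldsGenerically fun c : (Σ l, {s // s ∈ S l}) → ℂ =>
      (∀ x, c x ≠ 0) ∧ NondegenerateTriple (polyOfCoeffs (S i) fun s => c ⟨i, s⟩)
        (polyOfCoeffs (S j) fun s => c ⟨j, s⟩) (polyOfCoeffs (S k) fun s => c ⟨k, s⟩) u := by
  refine (HoldsGenerically.forall_ne_zero.and <|
    (holdsGenerically_noCommonNonzeroRoot (hne i) (hne j) hij).and <|
    (holdsGenerically_noCommonNonzeroRoot (hne k) (hne j) hjk.symm).and <|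
    holdsGenerically_noCommonNonzeroRoot (hne i) (hne k) hik).mono ?_
  rintro c ⟨hc, hij', hkj', hik'⟩
  have hcoeff (l : Fin 3) {n : ℕ} :=
    coeff_polyOfCoeffs_ne_zero_iff (S := S l) (fun s => hc ⟨l, s⟩) (n := n)
  have hdegree (l : Fin 3) := natDegree_polyOfCoeffs (fun s => hc ⟨l, s⟩) (hne l)
  have hcoeff_zero {l : Fin 3} (hl : 0 < (S l).min' (hne l)) :
      (polyOfCoeffs (S l) fun s => c ⟨l, s⟩).coeff 0 = 0 :=
    coeff_polyOfCoeffs_of_notMem fun h => hl.not_ge ((S l).min'_le 0 h)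
  refine ⟨hc, (hdegree i).trans hiR, (hdegree j).trans_lt hjR, (hdegree k).trans_lt hkR,
    hcoeff_zero hiL, (hcoeff j).2 (hjL ▸ (S j).min'_mem (hne j)), hcoeff_zero hkL, ?_,
    hij', hkj', hik', fun d hdi hdj hdk => ?_⟩
  · intro h₀
    exact (hcoeff k).2 ((S k).min'_mem (hne k)) (by rw [h₀, coeff_zero])
  · have hd (l : Fin 3) {n : ℕ} (hn : n ∈ S l) : d ∣ n := by
      obtain rfl | rfl | rfl : l = i ∨ l = j ∨ l = k := by lia
      exacts [hdi n ((hcoeff _).2 hn), hdj n ((hcoeff _).2 hn), hdk n ((hcoeff _).2 hn)]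
    refine eq_one_of_dvd_of_gcd_eq_one hgcd fun n hn => ?_
    simp only [Finset.mem_union] at hn
    obtain (hn | hn) | hn := hn <;> exact hd _ hn

end Generic

/-- Case (3B): the implicit Newton polygon is the convex hull of the five stated
implicit points. -/
theorem implicit_polygon_case3B (S : Fin 3 → Finset ℕ) (hne : ∀ i, (S i).Nonempty)
    (hgcd : ((S 0 ∪ S 1 ∪ S 2).filter (fun s => s ≠ 0)).gcd id = 1)
    (u : ℕ)
    (hu : u = max ((S 0).max' (hne 0)) (max ((S 1).max' (hne 1)) ((S 2).max' (hne 2))))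
    (hu1 : 1 ≤ u)
    (i j k : Fin 3) (hij : i ≠ j) (hik : i ≠ k) (hjk : j ≠ k)
    (hiL : 0 < (S i).min' (hne i)) (hiR : (S i).max' (hne i) = u)
    (hjL : (S j).min' (hne j) = 0) (hjR : (S j).max' (hne j) < u)
    (hkL : 0 < (S k).min' (hne k)) (hkR : (S k).max' (hne k) < u) :
    ∃ G : MvPolynomial (Σ i : Fin 3, {s // s ∈ S i}) ℂ, G ≠ 0 ∧
      ∀ c : (Σ i : Fin 3, {s // s ∈ S i}) → ℂ, MvPolynomial.eval c G ≠ 0 →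
        ∀ φ : MvPolynomial (Fin 2) ℂ, Irreducible φ → vanishesSame S c φ →
          newtonPolygon φ = convexHull ℝ
            {implicitPoint i j u ((S j).max' (hne j)) 0,
             implicitPoint i j u ((S k).max' (hne k)) (u - (S k).max' (hne k)),
             implicitPoint i j u ((S k).min' (hne k)) (u - (S k).min' (hne k)),
             implicitPoint i j u 0 (u - (S i).min' (hne i)),
             implicitPoint i j u 0 0} := by
  refine (holdsGenerically_nondegenerateTriple hne hgcd hij hik hjk hiL hiR hjL hjR hkL hkR).mono ?_
  rintro c ⟨hc, h⟩ φ hφ hφ₀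
  let P (l : Fin 3) : ℂ[X] := polyOfCoeffs (S l) fun s => c ⟨l, s⟩
  have hmax (l : Fin 3) : (P l).natDegree = (S l).max' (hne l) :=
    natDegree_polyOfCoeffs (fun s => hc ⟨l, s⟩) (hne l)
  have hmin (l : Fin 3) : (P l).natTrailingDegree = (S l).min' (hne l) :=
    natTrailingDegree_polyOfCoeffs (fun s => hc ⟨l, s⟩) (hne l)
  rw [NondegenerateTriple.newtonPolygon_eq (P := P) hij hik hjk h hφ hφ₀, hmax, hmax, hmin, hmin]
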